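/- arXiv:1304.6605 — 4 statements merged into one kernel-verified Lean document; each statement's English description precedes it below -/
import Mathlib

section
/- Let g : 𝔻 → ℂ be holomorphic of the form g(ζ) = g(0) − conj(g(0))·ζ² − ζ·q(ζ) with Re q ≥ 0 on 𝔻, and write g(ζ) = Σ_{j≥0} c_j ζ^j. Then |c_2| ≤ |c_0| + 2·(−Re c_1) and |c_j| ≤ 2·(−Re c_1) for all j ≥ 3. In particular Re c_1 ≤ 0. -/
open Complex Metric

theorem norm_circleAverage_le_circleAverage_norm {f : ℂ → ℂ} {c : ℂ} {R : ℝ} :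
    ‖Real.circleAverage f c R‖ ≤ Real.circleAverage (fun z ↦ ‖f z‖) c R := by
  have hpi : (0 : ℝ) ≤ 2 * Real.pi := by positivity
  rw [Real.circleAverage_def, Real.circleAverage_def, norm_smul, smul_eq_mul, Real.norm_eq_abs,
    abs_of_nonneg (inv_nonneg.2 hpi)]
  gcongr
  exact intervalIntegral.norm_integral_le_integral_norm hpi

/-- Cauchy's formula for the Taylor coefficients, as a circle average. -/
theorem circleAverage_inv_pow_mul_eq_iteratedDeriv {f : ℂ → ℂ} {R : ℝ} (hR : 0 < R)
    (hf : DifferentiableOn ℂ f (closedBall 0 R)) (n : ℕ) :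
    Real.circleAverage (fun z ↦ (z ^ n)⁻¹ * f z) 0 R = iteratedDeriv n f 0 / n.factorial := by
  have h := hf.circleIntegral_one_div_sub_center_pow_smul hR n
  rw [Real.circleAverage_eq_circleIntegral hR.ne']
  have hfun : (fun z : ℂ ↦ (z - 0)⁻¹ • ((z ^ n)⁻¹ * f z)) =
      fun z ↦ (1 / (z - 0) ^ (n + 1)) • f z := by
    funext z
    simp only [sub_zero, smul_eq_mul, one_div, pow_succ, mul_inv]
    ring
  rw [hfun, h, smul_smul, mul_div_assoc', inv_mul_cancel₀ two_pi_I_ne_zero, smul_eq_mul,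
    one_div, inv_mul_eq_div]

/-- On a circle centred at `0`, the averages of `z ^ (-n) * conj (f z)` vanish for holomorphic `f`
and `n ≠ 0`. -/
theorem circleAverage_inv_pow_mul_conj_eq_zero {f : ℂ → ℂ} {R : ℝ} (hR : 0 < R)
    (hf : DifferentiableOn ℂ f (closedBall 0 R)) {n : ℕ} (hn : n ≠ 0) :
    Real.circleAverage (fun z ↦ (z ^ n)⁻¹ * (starRingEnd ℂ) (f z)) 0 R = 0 := by
  have hd : DifferentiableOn ℂ (fun z ↦ z ^ n * f z) (closedBall 0 R) := by fun_prop
  have hzero : Real.circleAverage (fun z ↦ z ^ n * f z) 0 R = 0 := by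
    have hcl : DiffContOnCl ℂ (fun z ↦ z ^ n * f z) (ball 0 |R|) := by
      rw [abs_of_pos hR]
      exact hd.diffContOnCl_ball subset_rfl
    simpa [hn] using hcl.circleAverage
  have hint : CircleIntegrable (fun z ↦ z ^ n * f z) 0 R :=
    (hd.continuousOn.mono sphere_subset_closedBall).circleIntegrable hR.le
  have hconj := (conjCLE : ℂ →L[ℝ] ℂ).circleAverage_comp_comm hint
  rw [hzero, map_zero] at hconj
  have hcongr : Real.circleAverage (fun z ↦ (z ^ n)⁻¹ * (starRingEnd ℂ) (f z)) 0 R =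
      Real.circleAverage
        (fun z ↦ ((R : ℂ) ^ (2 * n))⁻¹ • ((conjCLE : ℂ →L[ℝ] ℂ) ∘ fun z ↦ z ^ n * f z) z) 0 R := by
    refine Real.circleAverage_congr_sphere fun z hz ↦ ?_
    have hnorm : ‖z‖ = R := by simpa [abs_of_pos hR] using hz
    have hz0 : z ≠ 0 := by
      rintro rfl
      simp at hnorm
      exact hR.ne hnorm
    have hc0 : (starRingEnd ℂ) z ≠ 0 := by simpa using hz0
    have hsq : (R : ℂ) ^ 2 = z * (starRingEnd ℂ) z := by
      rw [mul_conj, normSq_eq_norm_sq, hnorm]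
      push_cast
      rfl
    simp only [Function.comp_apply, ContinuousLinearEquiv.coe_coe, conjCLE_apply, map_mul, map_pow,
      smul_eq_mul, pow_mul, hsq, mul_pow]
    field_simp
  rw [hcongr, Real.circleAverage_fun_smul, hconj, smul_zero]

/-- Carathéodory's coefficient bound on a closed disc of radius `R`. -/
theorem norm_taylorCoeff_mul_pow_le_of_re_nonneg {f : ℂ → ℂ} {R : ℝ} (hR : 0 < R)
    (hf : DifferentiableOn ℂ f (closedBall 0 R)) (hre : ∀ z ∈ closedBall (0 : ℂ) R, 0 ≤ (f z).re)
    {n : ℕ} (hn : n ≠ 0) :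
    ‖iteratedDeriv n f 0 / n.factorial‖ * R ^ n ≤ 2 * (f 0).re := by
  have hcont : ContinuousOn f (sphere 0 R) := hf.continuousOn.mono sphere_subset_closedBall
  have hinv : ContinuousOn (fun z : ℂ ↦ (z ^ n)⁻¹) (sphere 0 R) :=
    (continuousOn_id.pow n).inv₀ fun z hz ↦ pow_ne_zero n (ne_of_mem_sphere hz hR.ne')
  have hmean : Real.circleAverage (fun z ↦ (f z).re) 0 R = (f 0).re := by
    have hcl : DiffContOnCl ℂ f (ball 0 |R|) := by
      rw [abs_of_pos hR]
      exact hf.diffContOnCl_ball subset_rfl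
    have h := reCLM.circleAverage_comp_comm (hcont.circleIntegrable hR.le)
    rw [hcl.circleAverage] at h
    exact h
  have hcoeff : iteratedDeriv n f 0 / n.factorial =
      Real.circleAverage (fun z ↦ (z ^ n)⁻¹ * f z + (z ^ n)⁻¹ * (starRingEnd ℂ) (f z)) 0 R := by
    have hint : CircleIntegrable (fun z ↦ (z ^ n)⁻¹ * f z) 0 R :=
      (hinv.mul hcont).circleIntegrable hR.le
    have hint_conj : CircleIntegrable (fun z ↦ (z ^ n)⁻¹ * (starRingEnd ℂ) (f z)) 0 R :=
      (hinv.mul (continuous_conj.comp_continuousOn hcont)).circleIntegrable hR.le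
    rw [Real.circleAverage_fun_add hint hint_conj,
      circleAverage_inv_pow_mul_eq_iteratedDeriv hR hf,
      circleAverage_inv_pow_mul_conj_eq_zero hR hf hn, add_zero]
  have hnorm : Real.circleAverage
      (fun z ↦ ‖(z ^ n)⁻¹ * f z + (z ^ n)⁻¹ * (starRingEnd ℂ) (f z)‖) 0 R =
      Real.circleAverage (fun z ↦ (2 * (R ^ n)⁻¹) • (f z).re) 0 R := by
    refine Real.circleAverage_congr_sphere fun z hz ↦ ?_
    rw [abs_of_pos hR] at hz
    have hzR : ‖z‖ = R := by simpa using hz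
    have hpos := hre z (sphere_subset_closedBall hz)
    simp only [← mul_add, add_conj, norm_mul, norm_inv, norm_pow, hzR, norm_real, smul_eq_mul,
      Real.norm_eq_abs]
    simp [abs_of_nonneg hpos]
    ring
  have hle : ‖iteratedDeriv n f 0 / n.factorial‖ ≤ 2 * (R ^ n)⁻¹ * (f 0).re := by
    rw [hcoeff]
    refine norm_circleAverage_le_circleAverage_norm.trans_eq ?_
    rw [hnorm, Real.circleAverage_fun_smul, hmean, smul_eq_mul]
  have hRn : 0 < R ^ n := pow_pos hR n
  calc _ ≤ 2 * (R ^ n)⁻¹ * (f 0).re * R ^ n := by gcongr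
    _ = 2 * (f 0).re := by field_simp

/-- **Carathéodory's coefficient bound**: the Taylor coefficients of a holomorphic function with
nonnegative real part on the unit disc are bounded by twice the real part at the origin. -/
theorem norm_taylorCoeff_le_of_re_nonneg {f : ℂ → ℂ} (hf : DifferentiableOn ℂ f (ball 0 1))
    (hre : ∀ z ∈ ball (0 : ℂ) 1, 0 ≤ (f z).re) {n : ℕ} (hn : n ≠ 0) :
    ‖iteratedDeriv n f 0 / n.factorial‖ ≤ 2 * (f 0).re := by
  have hlim : Filter.Tendsto (fun R : ℝ ↦ ‖iteratedDeriv n f 0 / n.factorial‖ * R ^ n)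
      (nhdsWithin 1 (Set.Iio 1)) (nhds (‖iteratedDeriv n f 0 / n.factorial‖ * 1 ^ n)) :=
    ((continuous_const.mul (continuous_pow n)).tendsto 1).mono_left nhdsWithin_le_nhds
  rw [one_pow, mul_one] at hlim
  refine le_of_tendsto hlim ?_
  filter_upwards [Ioo_mem_nhdsLT (zero_lt_one' ℝ)] with R hR
  have hsub : closedBall (0 : ℂ) R ⊆ ball 0 1 := closedBall_subset_ball hR.2
  exact norm_taylorCoeff_mul_pow_le_of_re_nonneg hR.1 (hf.mono hsub)
    (fun z hz ↦ hre z (hsub hz)) hn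

theorem iteratedDeriv_succ_id_mul_zero {f : ℂ → ℂ} (hf : AnalyticAt ℂ f 0) (n : ℕ) :
    iteratedDeriv (n + 1) (fun z ↦ z * f z) 0 = (n + 1) * iteratedDeriv n f 0 := by
  have h := iteratedDeriv_mul (n := n + 1) (f := fun z : ℂ ↦ z) (g := f) (x := 0)
    contDiffAt_id hf.contDiffAt
  have hfun : (fun z ↦ z * f z) = (fun z : ℂ ↦ z) * f := rfl
  rw [hfun, h, Finset.sum_eq_single 1]
  · simp [iteratedDeriv_one]
  · intro i _ hi
    have hpow := iteratedDeriv_fun_pow_zero (𝕜 := ℂ) (n := i) (m := 1)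
    simp only [pow_one] at hpow
    simp [hpow, hi]
  · simp

theorem stmt2 (g q : ℂ → ℂ)
    (hg : DifferentiableOn ℂ g (ball 0 1))
    (hq : DifferentiableOn ℂ q (ball 0 1))
    (hrep : ∀ ζ ∈ ball (0:ℂ) 1, g ζ = g 0 - (starRingEnd ℂ) (g 0) * ζ ^ 2 - ζ * q ζ)
    (hre : ∀ ζ ∈ ball (0:ℂ) 1, 0 ≤ (q ζ).re)
    (c : ℕ → ℂ)
    (hc : ∀ j, c j = iteratedDeriv j g 0 / (Nat.factorial j)) :
    ‖c 2‖ ≤ ‖c 0‖ + 2 * (-(c 1).re) ∧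
    (∀ j, 3 ≤ j → ‖c j‖ ≤ 2 * (-(c 1).re)) ∧
    (c 1).re ≤ 0 := by
  have hball : ball (0 : ℂ) 1 ∈ nhds 0 := ball_mem_nhds 0 one_pos
  have hqa : AnalyticAt ℂ q 0 := hq.analyticAt hball
  have hcoeff (n : ℕ) : c (n + 1) =
      -(if n = 1 then (starRingEnd ℂ) (g 0) else 0) - iteratedDeriv n q 0 / n.factorial := by
    have hev : g =ᶠ[nhds 0] (fun ζ ↦ g 0 - (starRingEnd ℂ) (g 0) * ζ ^ 2) - fun ζ ↦ ζ * q ζ := by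
      filter_upwards [hball] with ζ hζ using hrep ζ hζ
    have hsub := iteratedDeriv_sub (n := n + 1) (x := (0 : ℂ))
      (f := fun ζ ↦ g 0 - (starRingEnd ℂ) (g 0) * ζ ^ 2) (g := fun ζ ↦ ζ * q ζ)
      (by fun_prop) (contDiffAt_id.mul hqa.contDiffAt)
    rw [hc, hev.iteratedDeriv_eq, hsub, iteratedDeriv_succ_id_mul_zero hqa,
      iteratedDeriv_const_sub n.succ_pos, iteratedDeriv_neg, iteratedDeriv_const_mul_field,
      iteratedDeriv_fun_pow_zero]
    have hn : (n : ℂ) + 1 ≠ 0 := mod_cast n.succ_ne_zero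
    by_cases h : n = 1
    · subst h
      simp
      ring
    · simp only [Nat.succ_eq_add_one, Nat.reduceEqDiff, h, if_false, Nat.factorial_succ,
        Nat.cast_mul, Nat.cast_succ, Nat.cast_zero, mul_zero, neg_zero, zero_sub, neg_div]
      rw [mul_div_mul_left _ _ hn]
  have hc0 : c 0 = g 0 := by simp [hc]
  have hc1 : -(c 1).re = (q 0).re := by
    have h := hcoeff 0
    simp at h
    simp [h]
  rw [hc1]
  refine ⟨?_, fun j hj ↦ ?_, ?_⟩
  · have h := hcoeff 1
    rw [if_pos rfl] at h
    rw [h, hc0]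
    refine (norm_sub_le _ _).trans (add_le_add ?_ ?_)
    · simp
    · exact norm_taylorCoeff_le_of_re_nonneg hq hre one_ne_zero
  · obtain ⟨n, rfl⟩ : ∃ n, j = n + 1 := ⟨j - 1, by omega⟩
    rw [hcoeff, if_neg (by omega), neg_zero, zero_sub, norm_neg]
    exact norm_taylorCoeff_le_of_re_nonneg hq hre (by omega)
  · have := hre 0 (mem_ball_self one_pos)
    linarith
end

section
/- Let X be a complex Banach space with open unit ball B and let G : B → X be an infinitesimal generator with homogeneous expansion G(z) = G(0) + Tz + Σ_{j≥2} Q_j(z) (T = DG(0), Q_j continuous homogeneous polynomials of degree j). Then for every unit vector v and supporting functional v*: |⟨Q_2(v), v*⟩| ≤ ‖G(0)‖ − 2·Re⟨Tv, v*⟩, and |⟨Q_j(v), v*⟩| ≤ −2·Re⟨Tv, v*⟩ for all j ≥ 3. -/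
open Complex Metric

open scoped Real ComplexConjugate

lemma integral_exp_int_mul_I (m : ℤ) :
    ∫ θ in (0:ℝ)..2 * π, exp (m * θ * I) = if m = 0 then (2 * π : ℂ) else 0 := by
  split_ifs with hm
  · simp [hm]
  · have hc : (m * I : ℂ) ≠ 0 := by simp [hm]
    have h := integral_exp_mul_complex (a := 0) (b := 2 * π) hc
    have h1 : (m * I * ((2 * π : ℝ) : ℂ)) = m * (2 * π * I) := by push_cast; ring
    rw [h1, exp_int_mul_two_pi_mul_I] at h
    simpa [mul_right_comm] using h

/-- Fourier coefficients of an absolutely convergent series `∑ aₖ e^{ikθ}`. -/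
lemma hasSum_integral_tsum_mul_exp {a : ℕ → ℂ} (ha : Summable fun k => ‖a k‖) (m : ℤ) :
    HasSum (fun k : ℕ => if (k : ℤ) = m then 2 * π * a k else 0)
      (∫ θ in (0:ℝ)..2 * π, (∑' k : ℕ, a k * exp (k * θ * I)) * exp (-(m * θ * I))) := by
  have key : ∀ (k : ℕ) (θ : ℝ),
      a k * exp (k * θ * I) * exp (-(m * θ * I)) = a k * exp (((k - m : ℤ) : ℂ) * θ * I) := by
    intro k θ
    rw [mul_assoc, ← exp_add]
    push_cast
    ring_nf
  have hnorm : ∀ (n : ℤ) (θ : ℝ), ‖exp (n * θ * I)‖ = 1 := fun n θ => by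
    simpa using norm_exp_ofReal_mul_I (n * θ)
  have h := intervalIntegral.hasSum_integral_of_dominated_convergence
    (μ := MeasureTheory.volume) (a := 0) (b := 2 * π)
    (F := fun (k : ℕ) (θ : ℝ) => a k * exp (((k - m : ℤ) : ℂ) * θ * I))
    (f := fun θ : ℝ => (∑' k : ℕ, a k * exp (k * θ * I)) * exp (-(m * θ * I)))
    (fun k _ => ‖a k‖)
    (fun k => (by fun_prop : Continuous _).aestronglyMeasurable)
    (fun k => .of_forall fun θ _ => by rw [norm_mul, hnorm, mul_one])
    (.of_forall fun θ _ => ha) (by simp)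
    (.of_forall fun θ _ => by
      simp only [← key]
      refine HasSum.mul_right _ (Summable.hasSum (.of_norm ?_))
      refine ha.congr fun k => ?_
      have := hnorm k θ
      rw [Int.cast_natCast] at this
      rw [norm_mul, this, mul_one])
  refine (congrArg (HasSum · _) (funext fun k => ?_)).mpr h
  rw [intervalIntegral.integral_const_mul, integral_exp_int_mul_I]
  simp only [sub_eq_zero]
  split_ifs <;> ring

lemma continuous_tsum_mul_exp {a : ℕ → ℂ} (ha : Summable fun k => ‖a k‖) :
    Continuous fun θ : ℝ => ∑' k : ℕ, a k * exp (k * θ * I) := by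
  refine continuous_tsum (fun k => by fun_prop) ha fun k θ => ?_
  have : ‖exp (k * θ * I)‖ = 1 := by simpa using norm_exp_ofReal_mul_I (k * θ)
  rw [norm_mul, this, mul_one]

lemma norm_coeff_le_of_re_tsum_nonneg {a : ℕ → ℂ} (ha : Summable fun k => ‖a k‖)
    (hre : ∀ θ : ℝ, 0 ≤ (∑' k : ℕ, a k * exp (k * θ * I)).re) {n : ℕ} (hn : n ≠ 0) :
    ‖a n‖ ≤ 2 * (a 0).re := by
  set f : ℝ → ℂ := fun θ => ∑' k : ℕ, a k * exp (k * θ * I)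
  have hcont : Continuous f := continuous_tsum_mul_exp ha
  have hcoeff : ∀ k : ℕ, ∫ θ in (0:ℝ)..2 * π, f θ * exp (-(k * θ * I)) = 2 * π * a k := by
    intro k
    have h := hasSum_integral_tsum_mul_exp ha k
    simp only [Nat.cast_inj, Int.cast_natCast] at h
    refine h.unique ?_
    simpa using hasSum_single k (fun j hj => if_neg hj)
  have hneg : ∫ θ in (0:ℝ)..2 * π, f θ * exp (n * θ * I) = 0 := by
    have h := hasSum_integral_tsum_mul_exp ha (-n)
    have hk : ∀ k : ℕ, (k : ℤ) ≠ -n := fun k => by omega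
    simp only [hk, if_false, Int.cast_neg, Int.cast_natCast, neg_mul, neg_neg] at h
    exact h.unique hasSum_zero
  have hconj : ∫ θ in (0:ℝ)..2 * π, conj (f θ) * exp (-(n * θ * I)) = 0 := by
    have h := congrArg conj hneg
    rw [intervalIntegral.integral_of_le Real.two_pi_pos.le, ← integral_conj, map_zero,
      ← intervalIntegral.integral_of_le Real.two_pi_pos.le] at h
    rw [← h]
    refine intervalIntegral.integral_congr fun θ _ => ?_
    simp [← exp_conj]
  have hsum : ∫ θ in (0:ℝ)..2 * π, ((2 * (f θ).re : ℝ) : ℂ) * exp (-(n * θ * I))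
      = 2 * π * a n := by
    rw [← hcoeff n, ← add_zero (∫ θ in (0:ℝ)..2 * π, f θ * _), ← hconj,
      ← intervalIntegral.integral_add]
    · refine intervalIntegral.integral_congr fun θ _ => ?_
      simp only [← add_mul, add_conj]
    · exact Continuous.intervalIntegrable (by fun_prop) _ _
    · exact Continuous.intervalIntegrable
        ((continuous_conj.comp hcont).mul (by fun_prop)) _ _
  have hre0 : ∫ θ in (0:ℝ)..2 * π, 2 * (f θ).re = 2 * (2 * π * (a 0).re) := by
    have h := hcoeff 0
    simp only [Nat.cast_zero, zero_mul, neg_zero, exp_zero, mul_one] at h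
    have h' := intervalIntegral.intervalIntegral_re (𝕜 := ℂ)
      (hcont.intervalIntegrable (μ := MeasureTheory.volume) 0 (2 * π))
    rw [h] at h'
    rw [intervalIntegral.integral_const_mul]
    congr 1
    simpa using h'
  have hle : ‖2 * π * a n‖ ≤ 2 * (2 * π * (a 0).re) := by
    rw [← hsum, ← hre0]
    refine intervalIntegral.norm_integral_le_of_norm_le (by positivity)
      (.of_forall fun θ _ => ?_) (Continuous.intervalIntegrable (by fun_prop) _ _)
    have h1 : ‖exp (-(n * θ * I))‖ = 1 := by
      simpa using norm_exp_ofReal_mul_I (-(n * θ))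
    rw [norm_mul, h1, mul_one, norm_real, Real.norm_of_nonneg]
    have := hre θ
    positivity
  have hnorm : ‖2 * π * a n‖ = 2 * π * ‖a n‖ := by
    simp [abs_of_pos Real.pi_pos]
  rw [hnorm] at hle
  have hpi := Real.two_pi_pos
  exact le_of_mul_le_mul_left (by linarith) hpi

/-- **Carathéodory's coefficient inequality** for power series with nonnegative real part on the
punctured unit disc. -/
lemma norm_coeff_le_of_hasSum_re_nonneg {p : ℕ → ℂ} {F : ℂ → ℂ}
    (hF : ∀ ζ : ℂ, ζ ≠ 0 → ‖ζ‖ < 1 → HasSum (fun k => p k * ζ ^ k) (F ζ))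
    (hre : ∀ ζ : ℂ, ζ ≠ 0 → ‖ζ‖ < 1 → 0 ≤ (F ζ).re) {n : ℕ} (hn : n ≠ 0) :
    ‖p n‖ ≤ 2 * (p 0).re := by
  have hr : ∀ r ∈ Set.Ioo (0:ℝ) 1, ‖p n‖ * r ^ n ≤ 2 * (p 0).re := by
    rintro r ⟨h0, h1⟩
    have hs : Summable fun k => ‖p k * (r:ℂ) ^ k‖ :=
      (hF r (by exact_mod_cast h0.ne') (by simpa [abs_of_pos h0])).summable.norm
    have h := norm_coeff_le_of_re_tsum_nonneg hs (fun θ => ?_) hn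
    · simpa [abs_of_pos h0] using h
    · have hζ : (r * exp (θ * I) : ℂ) ≠ 0 :=
        mul_ne_zero (by exact_mod_cast h0.ne') (exp_ne_zero _)
      have hζ' : ‖(r * exp (θ * I) : ℂ)‖ < 1 := by
        simpa [norm_exp_ofReal_mul_I, abs_of_pos h0]
      convert hre _ hζ hζ' using 2
      rw [← (hF _ hζ hζ').tsum_eq]
      refine tsum_congr fun k => ?_
      rw [mul_pow, ← exp_nat_mul]
      ring_nf
  have hlim : Filter.Tendsto (fun r : ℝ => ‖p n‖ * r ^ n) (nhdsWithin 1 (Set.Iio 1))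
      (nhds (‖p n‖ * 1 ^ n)) :=
    ((by fun_prop : Continuous fun r : ℝ => ‖p n‖ * r ^ n).tendsto 1).mono_left
      nhdsWithin_le_nhds
  rw [one_pow, mul_one] at hlim
  exact le_of_tendsto hlim
    (Filter.eventually_of_mem (Ioo_mem_nhdsLT zero_lt_one) hr)

/-- Coefficient bounds for a one-dimensional generator `g ζ = ∑ aⱼ ζ ^ j` on the unit disc. -/
lemma norm_generator_coeff_le {a : ℕ → ℂ} {g : ℂ → ℂ}
    (hg : ∀ ζ : ℂ, ‖ζ‖ < 1 → HasSum (fun j => a j * ζ ^ j) (g ζ))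
    (hgen : ∀ ζ : ℂ, ‖ζ‖ < 1 →
      (conj ζ * g ζ).re ≤ (conj ζ * a 0).re * (1 - ‖ζ‖ ^ 2)) {n : ℕ} (hn : n ≠ 0) :
    ‖a (n + 1) + if n = 1 then conj (a 0) else 0‖ ≤ -(2 * (a 1).re) := by
  have h := norm_coeff_le_of_hasSum_re_nonneg
    (p := fun k => -(a (k + 1) + if k = 1 then conj (a 0) else 0))
    (F := fun ζ => -((g ζ - a 0) * ζ⁻¹ + conj (a 0) * ζ)) ?_ ?_ hn
  · simpa only [norm_neg, zero_add, zero_ne_one, if_false, add_zero, neg_re, mul_neg] using h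
  · intro ζ hζ hζ1
    have h1 : HasSum (fun k => a (k + 1) * ζ ^ (k + 1)) (g ζ - a 0) := by
      have := (hasSum_nat_add_iff' (f := fun j => a j * ζ ^ j) 1).2 (hg ζ hζ1)
      simpa using this
    have h2 := ((h1.mul_right ζ⁻¹).add (hasSum_ite_eq 1 (conj (a 0) * ζ))).neg
    refine (congrArg (HasSum · _) (funext fun k => ?_)).mpr h2
    split_ifs with hk
    · subst hk
      field_simp
      ring
    · field_simp
      ring
  · intro ζ hζ hζ1
    have hpos : 0 < normSq ζ := normSq_pos.2 hζ
    have h1 := hgen ζ hζ1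
    rw [← normSq_eq_norm_sq] at h1
    have h2 : normSq ζ * (-((g ζ - a 0) * ζ⁻¹ + conj (a 0) * ζ)).re
        = (conj ζ * a 0).re * (1 - normSq ζ) - (conj ζ * g ζ).re := by
      have h3 : (normSq ζ : ℂ) * -((g ζ - a 0) * ζ⁻¹ + conj (a 0) * ζ)
          = conj ζ * a 0 - conj ζ * g ζ - normSq ζ * (conj (a 0) * ζ) := by
        rw [← mul_conj]
        field_simp
        ring
      rw [← re_ofReal_mul, h3]
      rw [sub_re, sub_re, re_ofReal_mul]
      simp only [mul_re, conj_re, conj_im]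
      ring
    exact nonneg_of_mul_nonneg_right (by rw [h2]; linarith) hpos

theorem stmt6 {X : Type*} [NormedAddCommGroup X] [NormedSpace ℂ X] [CompleteSpace X]
    (G : X → X) (hG : DifferentiableOn ℂ G (ball 0 1))
    (hgen : ∀ z ∈ ball (0:X) 1, ∀ zs : X →L[ℂ] ℂ,
      zs z = (‖z‖ ^ 2 : ℂ) → ‖zs‖ = ‖z‖ →
      (zs (G z)).re ≤ (zs (G 0)).re * (1 - ‖z‖ ^ 2))
    (Q : ℕ → X → X)
    (hQcont : ∀ j, Continuous (Q j))
    (hQhom : ∀ j, ∀ (c : ℂ) (v : X), Q j (c • v) = c ^ j • Q j v)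
    (hQ0 : ∀ z, Q 0 z = G 0)
    (hQ1 : ∀ z, Q 1 z = fderiv ℂ G 0 z)
    (hsum : ∀ z ∈ ball (0:X) 1, HasSum (fun j => Q j z) (G z)) :
    ∀ v : X, ‖v‖ = 1 → ∀ vs : X →L[ℂ] ℂ, vs v = 1 → ‖vs‖ = 1 →
      ‖vs (Q 2 v)‖ ≤ ‖G 0‖ - 2 * (vs (fderiv ℂ G 0 v)).re ∧
      ∀ j, 3 ≤ j → ‖vs (Q j v)‖ ≤ -(2 * (vs (fderiv ℂ G 0 v)).re) := by
  intro v hv vs hvs hvs1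
  have hball : ∀ ζ : ℂ, ‖ζ‖ < 1 → ζ • v ∈ ball (0:X) 1 := fun ζ hζ => by
    simpa [norm_smul, hv] using hζ
  have hsum' : ∀ ζ : ℂ, ‖ζ‖ < 1 →
      HasSum (fun j => vs (Q j v) * ζ ^ j) (vs (G (ζ • v))) := fun ζ hζ => by
    have h := vs.hasSum (hsum _ (hball ζ hζ))
    simpa [hQhom, mul_comm] using h
  have hgen' : ∀ ζ : ℂ, ‖ζ‖ < 1 → (conj ζ * vs (G (ζ • v))).re
      ≤ (conj ζ * vs (Q 0 v)).re * (1 - ‖ζ‖ ^ 2) := fun ζ hζ => by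
    have h := hgen _ (hball ζ hζ) (conj ζ • vs)
      (by simp [hvs, norm_smul, hv, mul_conj']) (by simp [norm_smul, hv, hvs1])
    simpa [norm_smul, hv, hQ0] using h
  have hcoeff := fun n hn => norm_generator_coeff_le (n := n) hsum' hgen' hn
  simp only [hQ1, hQ0] at hcoeff
  refine ⟨?_, fun j hj => ?_⟩
  · have h := hcoeff 1 one_ne_zero
    rw [if_pos rfl] at h
    have h0 : ‖conj (vs (G 0))‖ ≤ ‖G 0‖ := by
      simpa [hvs1] using vs.le_opNorm (G 0)
    have h1 := norm_sub_le (vs (Q 2 v) + conj (vs (G 0))) (conj (vs (G 0)))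
    rw [add_sub_cancel_right] at h1
    linarith
  · obtain ⟨n, rfl⟩ : ∃ n, j = n + 1 := ⟨j - 1, by omega⟩
    have h := hcoeff n (by omega)
    rwa [if_neg (by omega), add_zero] at h
end

section
/- Let X be a complex Banach space with open unit ball B and let G : B → X be an infinitesimal generator with T := DG(0). Then for every z ∈ B: ‖G(z) − G(0)‖ ≤ 4‖z‖²·‖G(0)‖ + e·‖z‖·V(T) − 8·m(T)·‖z‖²·(1 − ‖z‖·ln 2)/(1 − ‖z‖)², where m(T) = inf{Re⟨Tv, v*⟩ : ‖v‖ = 1} and V(T) = sup{|⟨Tv, v*⟩| : ‖v‖ = 1}. In particular G is bounded on every ball of radius r < 1. -/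
open Complex Metric

/-- The bound on the `k`-th Euler iterate started on the unit sphere. -/
noncomputable def eulerBound (c : ℝ) (m k : ℕ) : ℝ := (fun a : ℝ => a + c * a ^ m)^[k] 1

lemma eulerBound_zero (c : ℝ) (m : ℕ) : eulerBound c m 0 = 1 := rfl

lemma eulerBound_succ (c : ℝ) (m k : ℕ) :
    eulerBound c m (k + 1) = eulerBound c m k + c * eulerBound c m k ^ m := by
  simp only [eulerBound, Function.iterate_succ_apply']

lemma one_le_eulerBound {c : ℝ} (hc : 0 ≤ c) (m k : ℕ) : 1 ≤ eulerBound c m k := by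
  induction k with
  | zero => simp [eulerBound_zero]
  | succ k ih =>
    rw [eulerBound_succ]
    have : 0 ≤ c * eulerBound c m k ^ m := by positivity
    linarith

lemma eulerBound_one_le {N k : ℕ} (hk : k ≤ N) : eulerBound (1 / N) 1 k ≤ Real.exp 1 := by
  have h : eulerBound (1 / N) 1 k = (1 + 1 / (N : ℝ)) ^ k := by
    induction k with
    | zero => simp [eulerBound_zero]
    | succ k ih => rw [eulerBound_succ, ih (by omega)]; ring
  calc eulerBound (1 / N) 1 k = (1 + 1 / (N : ℝ)) ^ k := h
    _ ≤ Real.exp (1 / N) ^ k := by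
        gcongr
        rw [add_comm]
        exact Real.add_one_le_exp _
    _ = Real.exp (k * (1 / N)) := by rw [← Real.exp_nat_mul]
    _ ≤ Real.exp 1 := by
        gcongr
        have : (k : ℝ) ≤ N := by exact_mod_cast hk
        rw [mul_one_div]
        exact div_le_one_of_le₀ this (by positivity)

lemma eulerBound_pow_mul_le {c : ℝ} (hc : 0 ≤ c) (p k : ℕ) :
    eulerBound c (p + 1) k ^ p * (1 - p * c * k) ≤ 1 := by
  induction k with
  | zero => simp [eulerBound_zero]
  | succ k ih =>
    have ha := one_le_eulerBound hc (p + 1) k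
    rw [eulerBound_succ]
    set a := eulerBound c (p + 1) k
    have hx : 0 ≤ c * a ^ p := by positivity
    have h : (a + c * a ^ (p + 1)) ^ p * (1 - p * c * ((k + 1 : ℕ) : ℝ))
        = (1 + c * a ^ p) ^ p * (a ^ p * (1 - p * c * k) - p * (c * a ^ p)) := by
      have : a + c * a ^ (p + 1) = a * (1 + c * a ^ p) := by ring
      rw [this, mul_pow]
      push_cast
      ring
    rw [h]
    calc (1 + c * a ^ p) ^ p * (a ^ p * (1 - p * c * k) - p * (c * a ^ p))
        ≤ (1 + c * a ^ p) ^ p * Real.exp (-(p * (c * a ^ p))) := by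
          gcongr
          have := Real.add_one_le_exp (-(p * (c * a ^ p)))
          linarith
      _ ≤ Real.exp (c * a ^ p) ^ p * Real.exp (-(p * (c * a ^ p))) := by
          gcongr
          rw [add_comm]
          exact Real.add_one_le_exp _
      _ = 1 := by rw [← Real.exp_nat_mul, ← Real.exp_add, add_neg_cancel, Real.exp_zero]

lemma eulerBound_le {m N k : ℕ} (hm : 2 ≤ m) (hN : 0 < N) (hk : k ≤ N) :
    eulerBound (1 / (m * N)) m k ≤ (m : ℝ) ^ (1 / ((m : ℝ) - 1)) := by
  obtain ⟨p, rfl⟩ : ∃ p, m = p + 1 := ⟨m - 1, by omega⟩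
  have hp : 0 < p := by omega
  have hp' : (0 : ℝ) < p := by exact_mod_cast hp
  have hN' : (0 : ℝ) < N := by exact_mod_cast hN
  have hk' : (k : ℝ) ≤ N := by exact_mod_cast hk
  have hc : (0 : ℝ) ≤ 1 / (((p + 1 : ℕ) : ℝ) * N) := by positivity
  have h := eulerBound_pow_mul_le hc p k
  have ha := one_le_eulerBound hc (p + 1) k
  set a := eulerBound (1 / (((p + 1 : ℕ) : ℝ) * N)) (p + 1) k
  have hle : 1 / ((p : ℝ) + 1) ≤ 1 - p * (1 / (((p + 1 : ℕ) : ℝ) * N)) * k := by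
    have : p * (1 / (((p + 1 : ℕ) : ℝ) * N)) * k = p / (p + 1) * (k / N) := by
      push_cast
      field_simp
    rw [this]
    have h1 : (k : ℝ) / N ≤ 1 := div_le_one_of_le₀ hk' hN'.le
    have h2 : p / ((p : ℝ) + 1) * (k / N) ≤ p / ((p : ℝ) + 1) * 1 := by gcongr
    have h3 : 1 / ((p : ℝ) + 1) = 1 - p / (p + 1) * 1 := by field_simp; ring
    linarith
  have hap : a ^ p ≤ p + 1 := by
    have : a ^ p * (1 / ((p : ℝ) + 1)) ≤ 1 := le_trans (by gcongr) h
    rwa [mul_one_div, div_le_one (by positivity)] at this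
  have hcast : ((p + 1 : ℕ) : ℝ) - 1 = p := by push_cast; ring
  rw [hcast, one_div, Real.le_rpow_inv_iff_of_pos (by linarith) (by positivity) hp',
    Real.rpow_natCast]
  push_cast
  exact hap

section Euler

variable {X : Type*} [NormedAddCommGroup X] [NormedSpace ℂ X]

/-- One Euler step for a vector field whose numerical range is controlled. -/
lemma norm_euler_step_le {Q : X → X} {R K V ε C t a : ℝ} {m : ℕ} (hV : 0 ≤ V)
    (hε : 0 ≤ ε)
    (hQ : DifferentiableOn ℂ Q (ball 0 (R + 2))) (hK : ∀ y ∈ ball (0 : X) (R + 2), ‖Q y‖ ≤ K)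
    (hnum : ∀ y ∈ ball (0 : X) (R + 2), ∀ f : X →L[ℂ] ℂ, ‖f‖ = 1 → f y = (‖y‖ : ℂ) →
      ‖f (Q y)‖ ≤ V * ‖y‖ ^ m + ε)
    (htK : t * K < 1) (hC : V * (1 + t * K) ^ m + ε + 2 * K * (t * K) ≤ C)
    (ha : 1 ≤ a) (haR : a ≤ R) {x : X} (hx : ‖x‖ ≤ a) {h : ℂ} (hh : ‖h‖ ≤ t) :
    ‖x + h • Q x‖ ≤ a + t * C * a ^ m := by
  have ht : 0 ≤ t := (norm_nonneg h).trans hh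
  have hxball : x ∈ ball (0 : X) (R + 2) := by simp; linarith
  have hK0 : 0 ≤ K := (norm_nonneg _).trans (hK x hxball)
  have hstep : ‖h • Q x‖ ≤ t * K := by
    rw [norm_smul]
    gcongr
    exact hK x hxball
  set y := x + h • Q x with hy
  have hC0 : 0 ≤ C := le_trans (by positivity) hC
  by_cases hy0 : ‖y‖ = 0
  · rw [hy0]; positivity
  obtain ⟨f, hf1, hfy⟩ := exists_dual_vector ℂ y hy0
  have hynorm : ‖y‖ ≤ a + t * K := (norm_add_le _ _).trans (by linarith)
  have hyball : y ∈ ball (0 : X) (R + 2) := by simp; linarith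
  have hdist : dist y x ≤ t * K := by
    rw [dist_eq_norm, hy, add_sub_cancel_left]
    exact hstep
  have hsub : ball x 1 ⊆ ball (0 : X) (R + 2) := by
    refine ball_subset_ball' ?_
    rw [dist_zero_right]
    linarith
  have hlip : ‖Q y - Q x‖ ≤ 2 * K * (t * K) := by
    have := Complex.dist_le_div_mul_dist_of_mapsTo_ball (f := Q) (c := x) (z := y) (R₁ := 1)
      (R₂ := 2 * K) (hQ.mono hsub) (fun w hw => by
        rw [mem_closedBall, dist_eq_norm]
        have h1 := hK w (hsub hw)
        have h2 := hK x hxball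
        exact (norm_sub_le _ _).trans (by linarith)) (by rw [mem_ball]; linarith)
    rw [dist_eq_norm, div_one] at this
    exact this.trans (by gcongr)
  have hfle : ∀ w : X, ‖f w‖ ≤ ‖w‖ := fun w => by simpa [hf1] using f.le_opNorm w
  have hfQ : ‖f (Q x)‖ ≤ V * ‖y‖ ^ m + ε + 2 * K * (t * K) := by
    have : f (Q x) = f (Q y) - f (Q y - Q x) := by simp
    rw [this]
    refine (norm_sub_le _ _).trans ?_
    have h1 := hnum y hyball f hf1 hfy
    have h2 := (hfle (Q y - Q x)).trans hlip
    linarith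
  have hpow : ‖y‖ ^ m ≤ a ^ m * (1 + t * K) ^ m := by
    rw [← mul_pow]
    gcongr
    have : 0 ≤ t * K := by positivity
    nlinarith
  have ham : 1 ≤ a ^ m := one_le_pow₀ ha
  have hfQ' : ‖f (Q x)‖ ≤ C * a ^ m := by
    calc ‖f (Q x)‖ ≤ V * ‖y‖ ^ m + ε + 2 * K * (t * K) := hfQ
      _ ≤ V * (a ^ m * (1 + t * K) ^ m) + ε * a ^ m + 2 * K * (t * K) * a ^ m := by
          have h1 : ε ≤ ε * a ^ m := le_mul_of_one_le_right hε ham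
          have h2 : 2 * K * (t * K) ≤ 2 * K * (t * K) * a ^ m :=
            le_mul_of_one_le_right (by positivity) ham
          gcongr
      _ = (V * (1 + t * K) ^ m + ε + 2 * K * (t * K)) * a ^ m := by ring
      _ ≤ C * a ^ m := by gcongr
  calc ‖y‖ = ‖f y‖ := by rw [hfy]; simp
    _ = ‖f x + h * f (Q x)‖ := by rw [hy]; simp
    _ ≤ ‖f x‖ + ‖h‖ * ‖f (Q x)‖ := by rw [← norm_mul]; exact norm_add_le _ _
    _ ≤ a + t * (C * a ^ m) := by
        gcongr
        exact (hfle x).trans hx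
    _ = a + t * C * a ^ m := by ring

/-- If the numerical range of a holomorphic vector field `Q` is controlled, then the Euler scheme
for `w' = ζ • Q w` and the Cauchy estimate bound the norm of `Q` on the closed unit ball. -/
lemma norm_le_of_numerical_bound {Q : X → X} {R K V ε C τ : ℝ} {m : ℕ} (hR : 0 ≤ R) (hV : 0 ≤ V)
    (hε : 0 ≤ ε) (hτ : 0 < τ) (hVC : V + ε < C)
    (hQ : DifferentiableOn ℂ Q (ball 0 (R + 2))) (hK : ∀ y ∈ ball (0 : X) (R + 2), ‖Q y‖ ≤ K)
    (hnum : ∀ y ∈ ball (0 : X) (R + 2), ∀ f : X →L[ℂ] ℂ, ‖f‖ = 1 → f y = (‖y‖ : ℂ) →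
      ‖f (Q y)‖ ≤ V * ‖y‖ ^ m + ε)
    (hbound : ∀ N k : ℕ, 0 < N → k ≤ N → eulerBound (τ / N * C) m k ≤ R)
    {x : X} (hx : ‖x‖ ≤ 1) : ‖Q x‖ ≤ R / τ := by
  have hC : 0 ≤ C := by linarith
  have hlim : Filter.Tendsto (fun N : ℕ => τ / (N : ℝ)) Filter.atTop (nhds 0) :=
    tendsto_const_div_atTop_nhds_zero_nat τ
  have e1 : ∀ᶠ N : ℕ in Filter.atTop, τ / (N : ℝ) * K < 1 := by
    have : Filter.Tendsto (fun N : ℕ => τ / (N : ℝ) * K) Filter.atTop (nhds (0 * K)) :=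
      hlim.mul_const K
    rw [zero_mul] at this
    exact this.eventually_lt_const one_pos
  have e2 : ∀ᶠ N : ℕ in Filter.atTop,
      V * (1 + τ / (N : ℝ) * K) ^ m + ε + 2 * K * (τ / (N : ℝ) * K) < C := by
    have hc : Continuous fun t : ℝ => V * (1 + t * K) ^ m + ε + 2 * K * (t * K) := by fun_prop
    have := (hc.tendsto 0).comp hlim
    refine this.eventually_lt_const ?_
    simpa using hVC
  obtain ⟨N, hN1, hN2, hN⟩ := (e1.and (e2.and (Filter.eventually_gt_atTop 0))).exists
  have hN' : (0 : ℝ) < N := by exact_mod_cast hN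
  let F : ℕ → ℂ → X := fun k ζ => (fun w => w + (ζ / N) • Q w)^[k] x
  have hF0 : ∀ ζ, F 0 ζ = x := fun ζ => rfl
  have hFs : ∀ k, F (k + 1) = fun ζ => F k ζ + (ζ / N) • Q (F k ζ) := fun k => by
    funext ζ
    simp only [F, Function.iterate_succ_apply']
  have hc0 : 0 ≤ τ / N * C := by positivity
  have hmain : ∀ k ≤ N, ∀ ζ : ℂ, ‖ζ‖ ≤ τ →
      ‖F k ζ‖ ≤ eulerBound (τ / N * C) m k ∧ DifferentiableAt ℂ (F k) ζ := by
    intro k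
    induction k with
    | zero =>
      intro _ ζ _
      refine ⟨by simpa [hF0, eulerBound_zero] using hx, ?_⟩
      exact differentiableAt_const x
    | succ k ih =>
      intro hk ζ hζ
      obtain ⟨ih1, ih2⟩ := ih (by omega) ζ hζ
      have hkR := hbound N k hN (by omega)
      rw [hFs]
      refine ⟨?_, ?_⟩
      · rw [eulerBound_succ]
        refine norm_euler_step_le hV hε hQ hK hnum hN1 hN2.le (one_le_eulerBound hc0 m k) hkR
          ih1 ?_
        rw [norm_div, Complex.norm_natCast]
        gcongr
      · have hQd : DifferentiableAt ℂ Q (F k ζ) :=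
          hQ.differentiableAt (isOpen_ball.mem_nhds (by simp; linarith))
        exact ih2.add ((differentiableAt_id.div_const _).smul (hQd.comp ζ ih2))
  have hF00 : ∀ k, F k 0 = x := by
    intro k
    induction k with
    | zero => rfl
    | succ k ih => rw [hFs]; simp [ih]
  have hderiv : ∀ k ≤ N, HasDerivAt (F k) (((k : ℂ) / N) • Q x) 0 := by
    intro k
    induction k with
    | zero =>
      intro _
      simpa using! hasDerivAt_const (0 : ℂ) x
    | succ k ih =>
      intro hk
      have ih' := ih (by omega)
      rw [hFs]
      have hQd : DifferentiableAt ℂ Q (F k 0) :=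
        hQ.differentiableAt (isOpen_ball.mem_nhds (by rw [hF00]; simp; linarith))
      have hQF : DifferentiableAt ℂ (fun ζ => Q (F k ζ)) 0 := hQd.comp 0 ih'.differentiableAt
      have := ih'.add (((hasDerivAt_id (0 : ℂ)).div_const (N : ℂ)).smul hQF.hasDerivAt)
      convert! this using 1
      simp only [id, hF00, zero_div, zero_smul, zero_add]
      rw [← add_smul]
      congr 1
      push_cast
      ring
  have hcauchy : ‖deriv (F N) 0‖ ≤ R / τ := by
    refine Complex.norm_deriv_le_of_forall_mem_sphere_norm_le hτ ?_ ?_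
    · refine DifferentiableOn.diffContOnCl fun ζ hζ => ?_
      rw [closure_ball _ hτ.ne'] at hζ
      exact (hmain N le_rfl ζ (by simpa using hζ)).2.differentiableWithinAt
    · intro ζ hζ
      exact (hmain N le_rfl ζ (by simpa using hζ.le)).1.trans (hbound N N hN le_rfl)
  rw [(hderiv N le_rfl).deriv, div_self (by exact_mod_cast hN.ne'), one_smul] at hcauchy
  exact hcauchy

end Euler

section RootAverage

/-- The average of the `e`-th powers of the `N`-th roots of unity. -/
noncomputable def rootAverage (N : ℕ) (e : ℤ) : ℂ :=
  (N : ℂ)⁻¹ * ∑ j ∈ Finset.range N, (exp (2 * Real.pi * I / N) ^ j) ^ e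

lemma norm_exp_two_pi_div (N : ℕ) : ‖exp (2 * Real.pi * I / N)‖ = 1 := by
  have : (2 * Real.pi * I / N : ℂ) = ((2 * Real.pi / N : ℝ) : ℂ) * I := by
    push_cast
    ring
  rw [this, Complex.norm_exp_ofReal_mul_I]

lemma norm_rootAverage_le (N : ℕ) (e : ℤ) : ‖rootAverage N e‖ ≤ 1 := by
  have h : ‖∑ j ∈ Finset.range N, (exp (2 * Real.pi * I / N) ^ j) ^ e‖ ≤ N := by
    refine (norm_sum_le _ _).trans ?_
    simp [norm_exp_two_pi_div]
  rw [rootAverage, norm_mul, norm_inv, Complex.norm_natCast]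
  exact (mul_le_mul_of_nonneg_left h (by positivity)).trans inv_mul_le_one

lemma tendsto_rootAverage (e : ℤ) :
    Filter.Tendsto (fun N => rootAverage N e) Filter.atTop (nhds (if e = 0 then 1 else 0)) := by
  refine tendsto_const_nhds.congr' ?_
  filter_upwards [Filter.eventually_gt_atTop e.natAbs] with N hN
  have hN0 : N ≠ 0 := by omega
  split_ifs with he
  · simp [rootAverage, he, hN0]
  · have hω := Complex.isPrimitiveRoot_exp N hN0
    set ω := exp (2 * Real.pi * I / N) with hωdef
    have hne : ω ^ e ≠ 1 := by
      rw [Ne, hω.zpow_eq_one_iff_dvd]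
      intro hdvd
      have := Int.natAbs_dvd_natAbs.mpr hdvd
      have := Nat.le_of_dvd (by omega) this
      simp at this
      omega
    have hsum : ∑ j ∈ Finset.range N, (ω ^ j) ^ e = 0 := by
      have h1 : ∀ j : ℕ, (ω ^ j) ^ e = (ω ^ e) ^ j := fun j => by
        rw [← zpow_natCast, ← zpow_natCast, zpow_comm]
      simp_rw [h1]
      have h2 := geom_sum_mul (ω ^ e) N
      rw [← h1, hω.pow_eq_one, one_zpow, sub_self] at h2
      exact (mul_eq_zero.mp h2).resolve_right (sub_ne_zero.mpr hne)
    rw [rootAverage, ← hωdef, hsum, mul_zero]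

end RootAverage

section Caratheodory

/-- The **Carathéodory inequality**: coefficients of a power series with non-negative real part. -/
lemma norm_coeff_le_two_mul_re {b : ℕ → ℂ} {p : ℂ → ℂ}
    (hp : ∀ ζ : ℂ, ζ ≠ 0 → ‖ζ‖ < 1 → HasSum (fun k => b k * ζ ^ k) (p ζ))
    (hre : ∀ ζ : ℂ, ζ ≠ 0 → ‖ζ‖ < 1 → 0 ≤ (p ζ).re) {n : ℕ} (hn : n ≠ 0) :
    ‖b n‖ ≤ 2 * (b 0).re := by
  obtain ⟨u, hu, hub⟩ : ∃ u : ℂ, ‖u‖ = 1 ∧ u * b n = -(‖b n‖ : ℂ) := by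
    by_cases h : b n = 0
    · exact ⟨1, by simp, by simp [h]⟩
    · have h' : (‖b n‖ : ℂ) ≠ 0 := by simpa using h
      refine ⟨-(‖b n‖ : ℂ) / b n, ?_, by field_simp⟩
      rw [norm_div, norm_neg, Complex.norm_real, norm_norm, div_self (by simpa using h)]
  have key : ∀ r : ℝ, 0 < r → r < 1 → ‖b n‖ * r ^ n ≤ 2 * (b 0).re := by
    intro r hr0 hr1
    have hs : Summable fun k => ‖b k * (r : ℂ) ^ k‖ :=
      (hp r (by exact_mod_cast hr0.ne') (by simpa [abs_of_pos hr0] using hr1)).summable.norm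
    let A : ℕ → ℕ → ℂ := fun N k => rootAverage N k +
      (u * rootAverage N (k - n) + (starRingEnd ℂ) u * rootAverage N (k + n)) / 2
    have hAnorm : ∀ N k, ‖A N k‖ ≤ 2 := by
      intro N k
      have h1 := norm_rootAverage_le N k
      have h2 : ‖u * rootAverage N (k - n)‖ ≤ 1 := by
        rw [norm_mul, hu, one_mul]; exact norm_rootAverage_le _ _
      have h3 : ‖(starRingEnd ℂ) u * rootAverage N (k + n)‖ ≤ 1 := by
        rw [norm_mul, RCLike.norm_conj, hu, one_mul]; exact norm_rootAverage_le _ _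
      refine (norm_add_le _ _).trans ?_
      rw [norm_div]
      have h4 := norm_add_le (u * rootAverage N (k - n))
        ((starRingEnd ℂ) u * rootAverage N (k + n))
      have h5 : ‖(2 : ℂ)‖ = 2 := by simp
      rw [h5]
      linarith
    let B : ℕ → ℂ := fun k => (if k = 0 then 1 else 0) + (if k = n then u / 2 else 0)
    have hAlim : ∀ k, Filter.Tendsto (fun N => A N k) Filter.atTop (nhds (B k)) := by
      intro k
      have h := (tendsto_rootAverage k).add ((((tendsto_rootAverage (k - n)).const_mul u).add
        ((tendsto_rootAverage (k + n)).const_mul ((starRingEnd ℂ) u))).div_const 2)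
      convert! h using 2
      have e1 : ((k : ℤ) = 0) = (k = 0) := by simp
      have e2 : ((k : ℤ) - n = 0) = (k = n) := by rw [sub_eq_zero]; simp
      have e3 : ¬ ((k : ℤ) + n = 0) := by omega
      simp only [B, e1, e2, e3, if_false]
      split_ifs <;> simp
    have hT := tendsto_tsum_of_dominated_convergence (𝓕 := Filter.atTop)
      (f := fun N k => A N k * (b k * (r : ℂ) ^ k)) (g := fun k => B k * (b k * (r : ℂ) ^ k))
      (hs.mul_left 2) (fun k => (hAlim k).mul_const _)
      (Filter.Eventually.of_forall fun N k => by
        rw [norm_mul]; exact mul_le_mul_of_nonneg_right (hAnorm N k) (norm_nonneg _))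
    have hlimval : ∑' k, B k * (b k * (r : ℂ) ^ k) = b 0 + u / 2 * (b n * (r : ℂ) ^ n) := by
      refine HasSum.tsum_eq ?_
      have h1 := hasSum_ite_eq 0 (b 0)
      have h2 := hasSum_ite_eq n (u / 2 * (b n * (r : ℂ) ^ n))
      convert! h1.add h2 using 2 with k
      simp only [B]
      split_ifs <;> simp_all
    have hnonneg : ∀ N : ℕ, 0 ≤ (∑' k, A N k * (b k * (r : ℂ) ^ k)).re := by
      intro N
      set ω := exp (2 * Real.pi * I / N) with hω
      have hωn : ‖ω‖ = 1 := norm_exp_two_pi_div N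
      have hω0 : ω ≠ 0 := by rw [hω]; exact exp_ne_zero _
      let c : ℕ → ℂ := fun j => 1 + (u * (ω ^ j) ^ (-(n : ℤ)) +
        (starRingEnd ℂ) u * (ω ^ j) ^ (n : ℤ)) / 2
      have hc : ∀ j, ∃ t : ℝ, 0 ≤ t ∧ c j = t := by
        intro j
        set w := u * (ω ^ j) ^ (-(n : ℤ)) with hw
        have hwn : ‖w‖ = 1 := by simp [hw, hu, hωn]
        have hconj : (starRingEnd ℂ) u * (ω ^ j) ^ (n : ℤ) = (starRingEnd ℂ) w := by
          rw [hw, map_mul, map_zpow₀, map_pow, ← Complex.inv_eq_conj hωn, inv_pow, inv_zpow',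
            neg_neg]
        refine ⟨1 + w.re, ?_, ?_⟩
        · have := (abs_le.mp (Complex.abs_re_le_norm w)).1
          linarith
        · simp only [c]
          rw [← hw, hconj, Complex.add_conj]
          push_cast
          ring
      have hz : ∀ j, ‖(r : ℂ) * ω ^ j‖ < 1 := fun j => by
        simp [hωn, abs_of_pos hr0, hr1]
      have hz0 : ∀ j, (r : ℂ) * ω ^ j ≠ 0 := fun j =>
        mul_ne_zero (by exact_mod_cast hr0.ne') (pow_ne_zero _ hω0)
      have hsum : HasSum (fun k => A N k * (b k * (r : ℂ) ^ k))
          ((N : ℂ)⁻¹ * ∑ j ∈ Finset.range N, c j * p (r * ω ^ j)) := by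
        have h := (hasSum_sum fun j (_ : j ∈ Finset.range N) =>
          (hp _ (hz0 j) (hz j)).mul_left (c j)).mul_left (N : ℂ)⁻¹
        convert! h using 2 with k
        simp only [A, rootAverage, ← hω, c, Finset.mul_sum, Finset.sum_div, ← Finset.sum_add_distrib,
          Finset.sum_mul]
        refine Finset.sum_congr rfl fun j _ => ?_
        have hj : ω ^ j ≠ 0 := pow_ne_zero _ hω0
        rw [zpow_sub₀ hj, zpow_add₀ hj, zpow_neg, zpow_natCast, zpow_natCast, mul_pow]
        ring
      rw [hsum.tsum_eq]
      have : (N : ℂ)⁻¹ = ((N : ℝ)⁻¹ : ℝ) := by push_cast; rfl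
      rw [this, Complex.re_ofReal_mul, Complex.re_sum]
      refine mul_nonneg (by positivity) (Finset.sum_nonneg fun j _ => ?_)
      obtain ⟨t, ht, hct⟩ := hc j
      rw [hct, Complex.re_ofReal_mul]
      exact mul_nonneg ht (hre _ (hz0 j) (hz j))
    have hfin := ge_of_tendsto' ((Complex.continuous_re.tendsto _).comp hT) hnonneg
    rw [hlimval] at hfin
    have h1 : u / 2 * (b n * (r : ℂ) ^ n) = ((-(‖b n‖ * r ^ n) / 2 : ℝ) : ℂ) := by
      have : u / 2 * (b n * (r : ℂ) ^ n) = (u * b n) * (r : ℂ) ^ n / 2 := by ring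
      rw [this, hub]
      push_cast
      ring
    rw [h1, Complex.add_re, Complex.ofReal_re] at hfin
    linarith
  have hlim : Filter.Tendsto (fun r : ℝ => ‖b n‖ * r ^ n) (nhdsWithin 1 (Set.Iio 1))
      (nhds (‖b n‖ * 1 ^ n)) :=
    ((continuous_const.mul (continuous_pow n)).tendsto 1).mono_left nhdsWithin_le_nhds
  rw [one_pow, mul_one] at hlim
  refine le_of_tendsto hlim ?_
  filter_upwards [Ioo_mem_nhdsLT (zero_lt_one' ℝ)] with r hr
  exact key r hr.1 hr.2

end Caratheodory

section HomogeneousPart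

variable {X : Type*} [NormedAddCommGroup X] [NormedSpace ℂ X]

/-- The homogeneous part of degree `n` of the Taylor expansion of `G` at the origin. -/
noncomputable def homogPart (G : X → X) (n : ℕ) (v : X) : X :=
  (n.factorial : ℂ)⁻¹ • iteratedDeriv n (fun ζ : ℂ => G (ζ • v)) 0

lemma homogPart_zero (G : X → X) (v : X) : homogPart G 0 v = G 0 := by
  simp [homogPart]

variable {G : X → X}

lemma differentiableOn_comp_smul (hG : DifferentiableOn ℂ G (ball 0 1)) {r : ℝ} {v : X}
    (hr : r * ‖v‖ ≤ 1) : DifferentiableOn ℂ (fun ζ : ℂ => G (ζ • v)) (ball 0 r) := by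
  refine hG.comp (by fun_prop) fun ζ hζ => ?_
  rw [mem_ball_zero_iff] at hζ ⊢
  rw [norm_smul]
  by_cases hv : ‖v‖ = 0
  · simp [hv]
  · have : 0 < ‖v‖ := lt_of_le_of_ne (norm_nonneg _) (Ne.symm hv)
    nlinarith

lemma homogPart_one (hG : DifferentiableOn ℂ G (ball 0 1)) (v : X) :
    homogPart G 1 v = fderiv ℂ G 0 v := by
  have hd : DifferentiableAt ℂ G 0 :=
    hG.differentiableAt (isOpen_ball.mem_nhds (mem_ball_self one_pos))
  have h1 : HasDerivAt (fun ζ : ℂ => ζ • v) v 0 := by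
    simpa using (hasDerivAt_id (0 : ℂ)).smul_const v
  have h2 : HasFDerivAt G (fderiv ℂ G 0) ((0 : ℂ) • v) := by
    simpa using hd.hasFDerivAt
  have h3 := h2.comp_hasDerivAt 0 h1
  simp only [homogPart, iteratedDeriv_one, Nat.factorial_one, Nat.cast_one, inv_one, one_smul]
  exact h3.deriv

variable [CompleteSpace X]

lemma hasSum_homogPart (hG : DifferentiableOn ℂ G (ball 0 1)) {ζ : ℂ} {v : X}
    (h : ‖ζ‖ * ‖v‖ < 1) : HasSum (fun k => ζ ^ k • homogPart G k v) (G (ζ • v)) := by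
  have hpos : 0 < (1 - ‖ζ‖ * ‖v‖) / (‖v‖ + 1) := by
    apply div_pos <;> [linarith; positivity]
  have hr : (‖ζ‖ + (1 - ‖ζ‖ * ‖v‖) / (‖v‖ + 1)) * ‖v‖ ≤ 1 := by
    have h1 : (1 - ‖ζ‖ * ‖v‖) / (‖v‖ + 1) * (‖v‖ + 1) = 1 - ‖ζ‖ * ‖v‖ := by
      field_simp
    nlinarith
  have := Complex.hasSum_taylorSeries_on_ball (differentiableOn_comp_smul hG hr) (z := ζ)
    (by simpa using hpos)
  convert! this using 2 with k
  rw [homogPart, sub_zero, smul_comm]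

lemma homogPart_smul (hG : DifferentiableOn ℂ G (ball 0 1)) (n : ℕ) (c : ℂ) (v : X) :
    homogPart G n (c • v) = c ^ n • homogPart G n v := by
  have key : ∀ (c : ℂ) (v : X), ‖c‖ ≤ 1 → homogPart G n (c • v) = c ^ n • homogPart G n v := by
    intro c v hc
    have hr : (1 / (‖v‖ + 1)) * ‖v‖ ≤ 1 := by
      rw [one_div_mul_eq_div]
      exact div_le_one_of_le₀ (by linarith) (by positivity)
    have hr0 : 0 < 1 / (‖v‖ + 1) := by positivity
    have hd := (differentiableOn_comp_smul hG hr).contDiffOn isOpen_ball (n := n)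
    have hmem : (0 : ℂ) ∈ ball (0 : ℂ) (1 / (‖v‖ + 1)) := mem_ball_self hr0
    have h := iteratedDerivWithin_comp_const_smul hmem isOpen_ball.uniqueDiffOn hd c
      (fun ζ hζ => by
        rw [mem_ball_zero_iff] at hζ ⊢
        rw [norm_mul]
        nlinarith [norm_nonneg ζ])
    rw [iteratedDerivWithin_of_isOpen isOpen_ball hmem, mul_zero,
      iteratedDerivWithin_of_isOpen isOpen_ball hmem] at h
    have hfun : (fun ζ : ℂ => G (ζ • c • v)) = fun ζ : ℂ => G ((c * ζ) • v) := by
      funext ζ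
      rw [smul_smul, mul_comm]
    rw [homogPart, homogPart, hfun, h, smul_comm]
  rcases le_or_gt ‖c‖ 1 with hc | hc
  · exact key c v hc
  · have hc0 : c ≠ 0 := norm_pos_iff.mp (by linarith)
    have h := key c⁻¹ (c • v) (by rw [norm_inv]; exact inv_le_one_of_one_le₀ hc.le)
    rw [inv_smul_smul₀ hc0] at h
    rw [h, smul_smul, ← mul_pow, mul_inv_cancel₀ hc0, one_pow, one_smul]

lemma norm_homogPart_mul_pow_le (hG : DifferentiableOn ℂ G (ball 0 1)) {δ M τ : ℝ}
    (hδ : δ < 1) (hM : ∀ z ∈ closedBall (0 : X) δ, ‖G z‖ ≤ M) (hτ : 0 < τ) {v : X}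
    (hv : τ * ‖v‖ ≤ δ) (n : ℕ) : ‖homogPart G n v‖ * τ ^ n ≤ M := by
  have hd : DiffContOnCl ℂ (fun ζ : ℂ => G (ζ • v)) (ball 0 τ) := by
    refine DifferentiableOn.diffContOnCl (hG.comp (by fun_prop) fun ζ hζ => ?_)
    rw [closure_ball _ hτ.ne', mem_closedBall_zero_iff] at hζ
    rw [mem_ball_zero_iff, norm_smul]
    have : ‖ζ‖ * ‖v‖ ≤ τ * ‖v‖ := by gcongr
    linarith
  have h := Complex.norm_iteratedDeriv_le_of_forall_mem_sphere_norm_le n hτ hd (C := M)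
    fun ζ hζ => hM _ (by
      rw [mem_sphere_zero_iff_norm] at hζ
      rw [mem_closedBall_zero_iff, norm_smul, hζ]
      exact hv)
  have hfac : (0 : ℝ) < n.factorial := by exact_mod_cast n.factorial_pos
  have hτn : 0 < τ ^ n := by positivity
  rw [homogPart, norm_smul, norm_inv, Complex.norm_natCast]
  rw [le_div_iff₀ hτn] at h
  rw [mul_assoc, inv_mul_le_iff₀ hfac]
  exact h

/-- On bounded balls, homogeneous parts are uniform limits of bounded holomorphic maps. -/
lemma exists_holomorphic_approx_homogPart (hG : DifferentiableOn ℂ G (ball 0 1)) (n : ℕ) {R ε : ℝ}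
    (hR : 0 < R) (hε : 0 < ε) :
    ∃ (Q : X → X) (K : ℝ), DifferentiableOn ℂ Q (ball 0 R) ∧ (∀ y ∈ ball (0 : X) R, ‖Q y‖ ≤ K) ∧
      ∀ y ∈ ball (0 : X) R, ‖Q y - homogPart G n y‖ ≤ ε := by
  have hcont : ContinuousAt G 0 :=
    (hG.differentiableAt (isOpen_ball.mem_nhds (mem_ball_self one_pos))).continuousAt
  obtain ⟨δ', hδ'0, hδ'⟩ := Metric.continuousAt_iff.mp hcont 1 one_pos
  obtain ⟨δ, hδ0, hδ1, M, hM⟩ : ∃ δ : ℝ, 0 < δ ∧ δ < 1 ∧ ∃ M : ℝ,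
      ∀ z ∈ closedBall (0 : X) δ, ‖G z‖ ≤ M := by
    refine ⟨min (δ' / 2) (1 / 2), by positivity, (min_le_right _ _).trans_lt (by norm_num),
      ‖G 0‖ + 1, fun z hz => ?_⟩
    have hz' : dist z 0 < δ' := by
      rw [mem_closedBall] at hz
      have := hz.trans (min_le_left _ _)
      linarith
    have := hδ' hz'
    rw [dist_eq_norm] at this
    have h2 := norm_sub_norm_le (G z) (G 0)
    linarith
  have hM0 : 0 ≤ M := (norm_nonneg _).trans (hM 0 (by simpa using hδ0.le))
  set τ : ℝ := δ / R with hτdef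
  have hτ : 0 < τ := by positivity
  have hτR : τ * R = δ := by rw [hτdef]; field_simp
  have hP : ∀ y ∈ ball (0 : X) R, ∀ k, ‖homogPart G k y‖ * τ ^ k ≤ M := fun y hy k => by
    refine norm_homogPart_mul_pow_le hG hδ1 hM hτ ?_ k
    rw [mem_ball_zero_iff] at hy
    rw [← hτR]
    gcongr
  set s : ℝ := τ / 2 with hsdef
  have hs : 0 < s := by positivity
  let E : ℕ → ℕ → ℝ := fun N k =>
    M / s ^ n * (1 / 2) ^ k * ‖rootAverage N ((k : ℤ) - n) - if k = n then 1 else 0‖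
  have hEbound : ∀ N k, ‖E N k‖ ≤ M / s ^ n * 2 * (1 / 2) ^ k := by
    intro N k
    have h1 : ‖rootAverage N ((k : ℤ) - n) - if k = n then 1 else 0‖ ≤ 2 := by
      refine (norm_sub_le _ _).trans ?_
      have := norm_rootAverage_le N ((k : ℤ) - n)
      have h2 : ‖(if k = n then 1 else 0 : ℂ)‖ ≤ 1 := by split_ifs <;> simp
      linarith
    rw [Real.norm_of_nonneg (by positivity)]
    calc E N k ≤ M / s ^ n * (1 / 2) ^ k * 2 := mul_le_mul_of_nonneg_left h1 (by positivity)
      _ = _ := by ring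
  have hgeo : Summable fun k : ℕ => M / s ^ n * 2 * (1 / 2 : ℝ) ^ k :=
    summable_geometric_two.mul_left _
  have hElim : Filter.Tendsto (fun N => ∑' k, E N k) Filter.atTop (nhds 0) := by
    have h := tendsto_tsum_of_dominated_convergence (𝓕 := Filter.atTop) (f := E)
      (g := fun _ => (0 : ℝ)) hgeo (fun k => by
        have h1 := ((tendsto_rootAverage ((k : ℤ) - n)).sub_const
          (if k = n then (1 : ℂ) else 0)).norm.const_mul (M / s ^ n * (1 / 2) ^ k)
        have h2 : ((k : ℤ) - n = 0) = (k = n) := by rw [sub_eq_zero]; simp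
        simpa only [h2, sub_self, norm_zero, mul_zero] using h1)
      (Filter.Eventually.of_forall hEbound)
    simpa using h
  obtain ⟨N, hNε⟩ := (hElim.eventually_le_const hε).exists
  set ω := exp (2 * Real.pi * I / N) with hω
  have hωn : ‖ω‖ = 1 := norm_exp_two_pi_div N
  have hω0 : ω ≠ 0 := by rw [hω]; exact exp_ne_zero _
  have hs0 : (s : ℂ) ≠ 0 := by exact_mod_cast hs.ne'
  have hsmall : ∀ y ∈ ball (0 : X) R, ∀ j : ℕ, ‖(s : ℂ) * ω ^ j‖ * ‖y‖ < 1 := fun y hy j => by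
    rw [mem_ball_zero_iff] at hy
    have h1 : ‖(s : ℂ) * ω ^ j‖ = s := by simp [hωn, abs_of_pos hs]
    rw [h1]
    have h2 : s * ‖y‖ ≤ s * R := by gcongr
    have h3 : s * R = δ / 2 := by rw [hsdef, ← hτR]; ring
    linarith
  let Q : X → X := fun y => (N : ℂ)⁻¹ • ∑ j ∈ Finset.range N,
    ((s : ℂ) * ω ^ j) ^ (-(n : ℤ)) • G (((s : ℂ) * ω ^ j) • y)
  have happrox : ∀ y ∈ ball (0 : X) R, ‖Q y - homogPart G n y‖ ≤ ε := by
    intro y hy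
    have hsum : HasSum (fun k : ℕ => (((s : ℂ) ^ k / (s : ℂ) ^ n) *
        (rootAverage N ((k : ℤ) - n) - if k = n then 1 else 0)) • homogPart G k y)
        (Q y - homogPart G n y) := by
      have h := ((hasSum_sum fun j (_ : j ∈ Finset.range N) =>
        (hasSum_homogPart hG (hsmall y hy j)).const_smul
          (((s : ℂ) * ω ^ j) ^ (-(n : ℤ)))).const_smul (N : ℂ)⁻¹).sub
        (hasSum_ite_eq n (homogPart G n y))
      convert! h using 2 with k
      have h1 : (N : ℂ)⁻¹ • ∑ j ∈ Finset.range N, ((s : ℂ) * ω ^ j) ^ (-(n : ℤ)) •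
          ((s : ℂ) * ω ^ j) ^ k • homogPart G k y
          = ((s : ℂ) ^ k / (s : ℂ) ^ n * rootAverage N ((k : ℤ) - n)) • homogPart G k y := by
        simp_rw [smul_smul]
        rw [← Finset.sum_smul, smul_smul, rootAverage, ← hω, mul_left_comm]
        congr 2
        rw [Finset.mul_sum]
        refine Finset.sum_congr rfl fun j _ => ?_
        have hj : ω ^ j ≠ 0 := pow_ne_zero _ hω0
        simp only [zpow_sub₀ hj, zpow_neg, zpow_natCast, mul_pow]
        field_simp
      rw [h1, mul_sub, sub_smul]
      congr 1
      split_ifs with hk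
      · subst hk
        rw [div_self (pow_ne_zero _ hs0), one_mul, one_smul]
      · simp
    have hEs : Summable (E N) := Summable.of_norm_bounded hgeo (hEbound N)
    refine (hsum.norm_le_of_bounded hEs.hasSum fun k => ?_).trans hNε
    rw [norm_smul, norm_mul, norm_div, norm_pow, norm_pow, Complex.norm_real,
      Real.norm_of_nonneg hs.le]
    have h1 : s ^ k * ‖homogPart G k y‖ ≤ M * (1 / 2) ^ k := by
      have : s ^ k = τ ^ k * (1 / 2) ^ k := by rw [← mul_pow, hsdef]; ring
      rw [this]
      have := mul_le_mul_of_nonneg_right (hP y hy k) (by positivity : (0 : ℝ) ≤ (1 / 2) ^ k)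
      linarith
    calc s ^ k / s ^ n * ‖rootAverage N ((k : ℤ) - n) - if k = n then 1 else 0‖ *
          ‖homogPart G k y‖
        = (s ^ k * ‖homogPart G k y‖) / s ^ n *
          ‖rootAverage N ((k : ℤ) - n) - if k = n then 1 else 0‖ := by ring
      _ ≤ (M * (1 / 2) ^ k) / s ^ n *
          ‖rootAverage N ((k : ℤ) - n) - if k = n then 1 else 0‖ := by gcongr
      _ = E N k := by simp only [E]; ring
  refine ⟨Q, M / τ ^ n + ε, ?_, ?_, happrox⟩
  · refine DifferentiableOn.const_smul (DifferentiableOn.fun_sum fun j _ =>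
      DifferentiableOn.const_smul (hG.comp (by fun_prop) fun y hy => ?_) _) _
    rw [mem_ball_zero_iff, norm_smul]
    exact hsmall y hy j
  · intro y hy
    have h1 := happrox y hy
    have h2 : ‖homogPart G n y‖ ≤ M / τ ^ n := by
      rw [le_div_iff₀ (by positivity)]
      exact hP y hy n
    have h3 := norm_sub_norm_le (Q y) (homogPart G n y)
    linarith

/-- **Harris's inequality**: the norm of a homogeneous part is controlled by its numerical
radius. -/
lemma norm_homogPart_le_of_numerical_radius (hG : DifferentiableOn ℂ G (ball 0 1)) {m : ℕ}
    (hm : m ≠ 0) {R V : ℝ} (hR : 0 ≤ R) (hV : 0 ≤ V)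
    (hnum : ∀ (v : X) (f : X →L[ℂ] ℂ), ‖v‖ = 1 → f v = 1 → ‖f‖ = 1 → ‖f (homogPart G m v)‖ ≤ V)
    (hbound : ∀ N k : ℕ, 0 < N → k ≤ N → eulerBound (1 / (m * N)) m k ≤ R)
    {x : X} (hx : ‖x‖ ≤ 1) : ‖homogPart G m x‖ ≤ m * R * V := by
  have hm' : (0 : ℝ) < m := by exact_mod_cast Nat.pos_of_ne_zero hm
  have hnum' : ∀ (y : X) (f : X →L[ℂ] ℂ), ‖f‖ = 1 → f y = (‖y‖ : ℂ) →
      ‖f (homogPart G m y)‖ ≤ V * ‖y‖ ^ m := by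
    intro y f hf hfy
    by_cases hy : ‖y‖ = 0
    · have hy0 : y = (0 : ℂ) • (0 : X) := by simpa using hy
      rw [hy0, homogPart_smul hG, zero_pow hm]
      simp only [zero_smul, map_zero, norm_zero]
      positivity
    · have hyC : (‖y‖ : ℂ) ≠ 0 := by exact_mod_cast hy
      have h1 := hnum ((‖y‖ : ℂ)⁻¹ • y) f
        (by rw [norm_smul, norm_inv, Complex.norm_real, norm_norm, inv_mul_cancel₀ hy])
        (by rw [map_smul, hfy, smul_eq_mul, inv_mul_cancel₀ hyC]) hf
      rw [homogPart_smul hG, map_smul, norm_smul, norm_pow, norm_inv, Complex.norm_real, norm_norm,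
        inv_pow, inv_mul_le_iff₀ (by positivity)] at h1
      linarith
  have key : ∀ ε : ℝ, 0 < ε → ‖homogPart G m x‖ ≤ m * R * (V + 2 * ε) + ε := by
    intro ε hε
    obtain ⟨Q, K, hQ, hK, hQP⟩ :=
      exists_holomorphic_approx_homogPart hG m (R := R + 2) (by positivity) hε
    have hC : 0 < V + 2 * ε := by positivity
    have h := norm_le_of_numerical_bound (Q := Q) (R := R) (K := K) (V := V) (ε := ε)
      (C := V + 2 * ε) (τ := 1 / (m * (V + 2 * ε))) (m := m) hR hV hε.le (by positivity)
      (by linarith) hQ hK (fun y hy f hf hfy => by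
        have h1 := hnum' y f hf hfy
        have h2 : ‖f (Q y - homogPart G m y)‖ ≤ ε := by
          have := f.le_opNorm (Q y - homogPart G m y)
          rw [hf, one_mul] at this
          exact this.trans (hQP y hy)
        have h3 : f (Q y) = f (homogPart G m y) + f (Q y - homogPart G m y) := by simp
        rw [h3]
        exact (norm_add_le _ _).trans (by linarith))
      (fun N k hN hk => by
        have : 1 / (m * (V + 2 * ε)) / N * (V + 2 * ε) = 1 / ((m : ℝ) * N) := by
          field_simp
        rw [this]
        exact hbound N k hN hk) hx
    have h1 := hQP x (by rw [mem_ball_zero_iff]; linarith)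
    have h2 := norm_sub_norm_le (homogPart G m x) (Q x)
    rw [norm_sub_rev] at h2
    have h3 : R / (1 / (m * (V + 2 * ε))) = m * R * (V + 2 * ε) := by
      rw [one_div, div_inv_eq_mul]; ring
    rw [h3] at h
    linarith
  have hlim : Filter.Tendsto (fun ε : ℝ => m * R * (V + 2 * ε) + ε) (nhdsWithin 0 (Set.Ioi 0))
      (nhds (m * R * V)) := by
    have hc : Continuous fun ε : ℝ => m * R * (V + 2 * ε) + ε := by fun_prop
    have := (hc.tendsto 0).mono_left (nhdsWithin_le_nhds (s := Set.Ioi 0))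
    simpa using this
  refine ge_of_tendsto hlim ?_
  filter_upwards [self_mem_nhdsWithin] with ε hε
  exact key ε hε

end HomogeneousPart

section HarrisConstant

lemma log_two_mul_sub_one_le {x : ℝ} (hx : 2 ≤ x) :
    Real.log 2 * (x - 1) ≤ ((1 - Real.log 2) * x + 2 * Real.log 2 - 1) * Real.log x := by
  have hL1 := Real.log_two_gt_d9
  have hL2 := Real.log_two_lt_d9
  set L := Real.log 2 with hL
  let ψ : ℝ → ℝ := fun x => ((1 - L) * x + 2 * L - 1) * Real.log x - L * (x - 1)
  have hder : ∀ y : ℝ, 2 ≤ y → HasDerivAt ψ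
      ((1 - L) * Real.log y + ((1 - L) * y + 2 * L - 1) * y⁻¹ - L) y := by
    intro y hy
    have h1 : HasDerivAt (fun x : ℝ => (1 - L) * x + 2 * L - 1) (1 - L) y := by
      simpa using (((hasDerivAt_id y).const_mul (1 - L)).add_const (2 * L)).sub_const 1
    have h2 : HasDerivAt (fun x : ℝ => L * (x - 1)) L y := by
      simpa using ((hasDerivAt_id y).sub_const 1).const_mul L
    exact (h1.mul (Real.hasDerivAt_log (by linarith))).sub h2
  have hmono : MonotoneOn ψ (Set.Ici 2) := by
    refine monotoneOn_of_deriv_nonneg (convex_Ici 2)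
      (fun y hy => (hder y hy).continuousAt.continuousWithinAt)
      (fun y hy => (hder y (interior_subset hy)).differentiableAt.differentiableWithinAt) ?_
    intro y hy
    have hy2 : 2 ≤ y := interior_subset hy
    rw [(hder y hy2).deriv]
    have hy0 : (0 : ℝ) < y := by linarith
    have hlog : L + 1 - 2 * y⁻¹ ≤ Real.log y := by
      have h := Real.one_sub_inv_le_log_of_pos (show 0 < y / 2 by positivity)
      rw [Real.log_div hy0.ne' two_ne_zero, inv_div] at h
      rw [← div_eq_mul_inv]
      linarith
    have hinv : y⁻¹ ≤ 1 / 2 := by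
      rw [one_div]
      exact inv_anti₀ two_pos hy2
    have hinv0 : 0 < y⁻¹ := by positivity
    have hexp : ((1 - L) * y + 2 * L - 1) * y⁻¹ = (1 - L) + (2 * L - 1) * y⁻¹ := by
      field_simp
      ring
    rw [hexp]
    have h1 : (1 - L) * (L + 1 - 2 * y⁻¹) ≤ (1 - L) * Real.log y :=
      mul_le_mul_of_nonneg_left hlog (by linarith)
    nlinarith
  have h := hmono (Set.mem_Ici.mpr le_rfl) (Set.mem_Ici.mpr hx) hx
  simp only [ψ, ← hL] at h
  nlinarith

/-- The tangent line of `x ↦ x ^ (x / (x - 1))` at `2` dominates it on `[2, ∞)`. -/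
lemma mul_rpow_one_div_sub_one_le {x : ℝ} (hx : 2 ≤ x) :
    x * x ^ (1 / (x - 1)) ≤ 4 + 4 * (1 - Real.log 2) * (x - 2) := by
  have hL1 := Real.log_two_gt_d9
  have hL2 := Real.log_two_lt_d9
  have hpos : ∀ y : ℝ, 2 ≤ y → 0 < 1 + (1 - Real.log 2) * (y - 2) := fun y hy => by
    have : 0 ≤ (1 - Real.log 2) * (y - 2) := mul_nonneg (by linarith) (by linarith)
    linarith
  let φ : ℝ → ℝ := fun y =>
    Real.log (1 + (1 - Real.log 2) * (y - 2)) - y * Real.log y / (y - 1)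
  have hder : ∀ y : ℝ, 2 ≤ y → HasDerivAt φ
      ((1 - Real.log 2) / (1 + (1 - Real.log 2) * (y - 2))
        - ((Real.log y + 1) * (y - 1) - y * Real.log y * 1) / (y - 1) ^ 2) y := by
    intro y hy
    have h1 : HasDerivAt (fun x : ℝ => 1 + (1 - Real.log 2) * (x - 2)) (1 - Real.log 2) y := by
      simpa using (((hasDerivAt_id y).sub_const 2).const_mul (1 - Real.log 2)).const_add 1
    have h2 : HasDerivAt (fun x : ℝ => x * Real.log x) (Real.log y + 1) y :=
      Real.hasDerivAt_mul_log (by linarith)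
    have h3 : HasDerivAt (fun x : ℝ => x - 1) 1 y := (hasDerivAt_id y).sub_const 1
    exact (h1.log (hpos y hy).ne').sub (h2.div h3 (by linarith))
  have hmono : MonotoneOn φ (Set.Ici 2) := by
    refine monotoneOn_of_deriv_nonneg (convex_Ici 2)
      (fun y hy => (hder y hy).continuousAt.continuousWithinAt)
      (fun y hy => (hder y (interior_subset hy)).differentiableAt.differentiableWithinAt) ?_
    intro y hy
    have hy2 : 2 ≤ y := interior_subset hy
    rw [(hder y hy2).deriv, sub_nonneg,
      div_le_div_iff₀ (pow_pos (by linarith) 2) (hpos y hy2)]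
    have := log_two_mul_sub_one_le hy2
    nlinarith
  have h := hmono (Set.mem_Ici.mpr le_rfl) (Set.mem_Ici.mpr hx) hx
  have hx0 : 0 < x := by linarith
  have hφ2 : φ 2 = -(2 * Real.log 2) := by
    simp only [φ]
    norm_num
  rw [hφ2] at h
  have hlog : Real.log (x * x ^ (1 / (x - 1))) = x * Real.log x / (x - 1) := by
    have : x - 1 ≠ 0 := by linarith
    rw [Real.log_mul hx0.ne' (Real.rpow_pos_of_pos hx0 _).ne', Real.log_rpow hx0]
    field_simp
    ring
  have h4 : 4 + 4 * (1 - Real.log 2) * (x - 2) = 4 * (1 + (1 - Real.log 2) * (x - 2)) := by ring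
  rw [h4, ← Real.log_le_log_iff (mul_pos hx0 (Real.rpow_pos_of_pos hx0 _))
    (mul_pos four_pos (hpos x hx)), hlog, Real.log_mul four_ne_zero (hpos x hx).ne']
  have h44 : Real.log 4 = 2 * Real.log 2 := by
    rw [show (4 : ℝ) = 2 ^ 2 by norm_num, Real.log_pow]
    norm_num
  rw [h44]
  simp only [φ] at h
  linarith

end HarrisConstant

lemma hasSum_affine_geometric (A C : ℝ) {ρ : ℝ} (hρ0 : 0 ≤ ρ) (hρ1 : ρ < 1) :
    HasSum (fun k : ℕ => ρ ^ (k + 2) *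
      ((4 + 4 * (1 - Real.log 2) * k) * A + if k = 0 then C else 0))
      (C * ρ ^ 2 + 4 * A * ρ ^ 2 * (1 - ρ * Real.log 2) / (1 - ρ) ^ 2) := by
  have h1ρ : 1 - ρ ≠ 0 := by linarith
  have hg : HasSum (fun k : ℕ => ρ ^ k) (1 - ρ)⁻¹ := hasSum_geometric_of_lt_one hρ0 hρ1
  have hk : HasSum (fun k : ℕ => (k : ℝ) * ρ ^ k) (ρ / (1 - ρ) ^ 2) :=
    hasSum_coe_mul_geometric_of_norm_lt_one (by rwa [Real.norm_of_nonneg hρ0])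
  have hC : HasSum (fun k : ℕ => if k = 0 then ρ ^ 2 * C else 0) (ρ ^ 2 * C) :=
    hasSum_ite_eq 0 (ρ ^ 2 * C)
  have h := ((hg.mul_left (4 * A * ρ ^ 2)).add
    (hk.mul_left (4 * (1 - Real.log 2) * A * ρ ^ 2))).add hC
  have hval : 4 * A * ρ ^ 2 * (1 - ρ)⁻¹ + 4 * (1 - Real.log 2) * A * ρ ^ 2 * (ρ / (1 - ρ) ^ 2)
      + ρ ^ 2 * C = C * ρ ^ 2 + 4 * A * ρ ^ 2 * (1 - ρ * Real.log 2) / (1 - ρ) ^ 2 := by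
    field_simp
    ring
  rw [hval] at h
  convert! h using 2 with k
  split_ifs with hk0
  · subst hk0
    push_cast
    ring
  · ring

section Generator

variable {X : Type*} [NormedAddCommGroup X] [NormedSpace ℂ X] [CompleteSpace X] {G : X → X}

/-- Carathéodory inequalities for the Taylor coefficients of an infinitesimal generator along a
complex line. -/
lemma norm_coeff_generator_le (hG : DifferentiableOn ℂ G (ball 0 1))
    (hgen : ∀ z ∈ ball (0:X) 1, ∀ zs : X →L[ℂ] ℂ,
      zs z = (‖z‖ ^ 2 : ℂ) → ‖zs‖ = ‖z‖ →
      (zs (G z)).re ≤ (zs (G 0)).re * (1 - ‖z‖ ^ 2))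
    {v : X} {f : X →L[ℂ] ℂ} (hv : ‖v‖ = 1) (hfv : f v = 1) (hf : ‖f‖ = 1) (k : ℕ) :
    ‖f (homogPart G (k + 2) v) + if k = 0 then (starRingEnd ℂ) (f (G 0)) else 0‖
      ≤ -(2 * (f (fderiv ℂ G 0 v)).re) := by
  let a : ℕ → ℂ := fun k => f (homogPart G k v)
  have ha0 : a 0 = f (G 0) := by simp [a, homogPart_zero]
  have ha1 : a 1 = f (fderiv ℂ G 0 v) := by simp only [a, homogPart_one hG]
  let b : ℕ → ℂ := fun k => -(a (k + 1) + if k = 1 then (starRingEnd ℂ) (a 0) else 0)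
  let p : ℂ → ℂ := fun ζ => -((f (G (ζ • v)) - a 0) * ζ⁻¹ + (starRingEnd ℂ) (a 0) * ζ)
  have hp : ∀ ζ : ℂ, ζ ≠ 0 → ‖ζ‖ < 1 → HasSum (fun k => b k * ζ ^ k) (p ζ) := by
    intro ζ hζ0 hζ1
    have h1 : HasSum (fun k => ζ ^ k * a k) (f (G (ζ • v))) := by
      simpa [a] using f.hasSum (hasSum_homogPart hG (ζ := ζ) (v := v) (by rwa [hv, mul_one]))
    have h2 := (hasSum_nat_add_iff' 1).mpr h1
    simp only [Finset.range_one, Finset.sum_singleton, pow_zero, one_mul] at h2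
    have h3 := ((h2.mul_right ζ⁻¹).add
      (hasSum_ite_eq 1 ((starRingEnd ℂ) (a 0) * ζ))).neg
    convert! h3 using 2 with k
    simp only [b]
    split_ifs with hk
    · subst hk
      field_simp
      ring
    · field_simp
      ring
  have hre : ∀ ζ : ℂ, ζ ≠ 0 → ‖ζ‖ < 1 → 0 ≤ (p ζ).re := by
    intro ζ hζ0 hζ1
    have hnorm : ‖ζ • v‖ = ‖ζ‖ := by rw [norm_smul, hv, mul_one]
    have h := hgen (ζ • v) (by rw [mem_ball_zero_iff, hnorm]; exact hζ1) ((starRingEnd ℂ) ζ • f)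
      (by
        rw [hnorm]
        simp only [map_smul, smul_eq_mul, hfv, smul_apply, mul_one]
        rw [Complex.mul_conj'])
      (by rw [norm_smul, hf, hnorm, RCLike.norm_conj, mul_one])
    rw [hnorm] at h
    simp only [smul_apply, smul_eq_mul] at h
    have hpos : 0 < ‖ζ‖ ^ 2 := pow_pos (norm_pos_iff.mpr hζ0) 2
    have hconj : (starRingEnd ℂ) ζ * ζ = ((‖ζ‖ ^ 2 : ℝ) : ℂ) := by
      rw [Complex.conj_mul']
      push_cast
      rfl
    have hmul : ((‖ζ‖ ^ 2 : ℝ) : ℂ) * p ζ = -((starRingEnd ℂ) ζ * f (G (ζ • v))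
        - (starRingEnd ℂ) ζ * a 0
        + ((‖ζ‖ ^ 2 : ℝ) : ℂ) * (starRingEnd ℂ) ((starRingEnd ℂ) ζ * a 0)) := by
      simp only [p]
      rw [map_mul, Complex.conj_conj, ← hconj]
      field_simp
    generalize p ζ = q at hmul ⊢
    have hre' := congrArg Complex.re hmul
    rw [Complex.re_ofReal_mul, Complex.neg_re, Complex.add_re, Complex.sub_re,
      Complex.re_ofReal_mul, Complex.conj_re] at hre'
    rw [← ha0] at h
    refine (mul_nonneg_iff_of_pos_left hpos).mp ?_
    rw [hre']
    linarith
  have h := norm_coeff_le_two_mul_re hp hre (Nat.succ_ne_zero k)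
  simp only [b, norm_neg, Nat.succ_eq_add_one, zero_ne_one, if_false, add_zero, zero_add,
    Nat.add_eq_right, Complex.neg_re, ha1, ha0] at h
  simpa [a, add_assoc] using h

lemma norm_fderiv_le_of_numerical_radius (hG : DifferentiableOn ℂ G (ball 0 1)) {V : ℝ}
    (hV0 : 0 ≤ V)
    (hV : ∀ (v : X) (vs : X →L[ℂ] ℂ), ‖v‖ = 1 → vs v = 1 → ‖vs‖ = 1 →
      ‖vs (fderiv ℂ G 0 v)‖ ≤ V) {v : X} (hv : ‖v‖ = 1) :
    ‖fderiv ℂ G 0 v‖ ≤ Real.exp 1 * V := by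
  have h := norm_homogPart_le_of_numerical_radius hG one_ne_zero (Real.exp_pos 1).le hV0
    (fun w ws hw hwsw hws => by rw [homogPart_one hG]; exact hV w ws hw hwsw hws)
    (fun N k _ hk => by simpa using eulerBound_one_le hk) hv.le
  rw [homogPart_one hG] at h
  simpa using h

lemma norm_homogPart_generator_le (hG : DifferentiableOn ℂ G (ball 0 1))
    (hgen : ∀ z ∈ ball (0:X) 1, ∀ zs : X →L[ℂ] ℂ,
      zs z = (‖z‖ ^ 2 : ℂ) → ‖zs‖ = ‖z‖ →
      (zs (G z)).re ≤ (zs (G 0)).re * (1 - ‖z‖ ^ 2)) {μ : ℝ} (hμ0 : μ ≤ 0)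
    (hμ : ∀ (v : X) (vs : X →L[ℂ] ℂ), ‖v‖ = 1 → vs v = 1 → ‖vs‖ = 1 →
      μ ≤ (vs (fderiv ℂ G 0 v)).re) {v : X} (hv : ‖v‖ = 1) (k : ℕ) :
    ‖homogPart G (k + 2) v‖ ≤
      (4 + 4 * (1 - Real.log 2) * k) * (-(2 * μ)) + if k = 0 then 4 * ‖G 0‖ else 0 := by
  have hW : 0 ≤ -(2 * μ) + if k = 0 then ‖G 0‖ else 0 := by
    split_ifs <;> [have := norm_nonneg (G 0); skip] <;> linarith
  have hnum : ∀ (w : X) (ws : X →L[ℂ] ℂ), ‖w‖ = 1 → ws w = 1 → ‖ws‖ = 1 →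
      ‖ws (homogPart G (k + 2) w)‖ ≤ -(2 * μ) + if k = 0 then ‖G 0‖ else 0 := by
    intro w ws hw hwsw hws
    have h1 := norm_coeff_generator_le hG hgen hw hwsw hws k
    have h2 := hμ w ws hw hwsw hws
    split_ifs at h1 ⊢
    · have h3 := ws.le_opNorm (G 0)
      rw [hws, one_mul] at h3
      have h4 := norm_sub_le (ws (homogPart G (k + 2) w) + (starRingEnd ℂ) (ws (G 0)))
        ((starRingEnd ℂ) (ws (G 0)))
      rw [add_sub_cancel_right, RCLike.norm_conj] at h4
      linarith
    · rw [add_zero] at h1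
      linarith
  have h := norm_homogPart_le_of_numerical_radius hG (m := k + 2) (by omega)
    (R := ((k + 2 : ℕ) : ℝ) ^ (1 / (((k + 2 : ℕ) : ℝ) - 1))) (by positivity) hW hnum
    (fun N j hN hj => eulerBound_le (by omega) hN hj) hv.le
  have hκ := mul_rpow_one_div_sub_one_le (x := ((k + 2 : ℕ) : ℝ))
    (by push_cast; linarith [(Nat.cast_nonneg k : (0:ℝ) ≤ k)])
  refine (h.trans (mul_le_mul_of_nonneg_right hκ hW)).trans (le_of_eq ?_)
  push_cast
  split_ifs with hk
  · subst hk
    push_cast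
    ring
  · ring

lemma hasSum_homogPart_add_two (hG : DifferentiableOn ℂ G (ball 0 1)) {v : X} {ζ : ℂ}
    (h : ‖ζ‖ * ‖v‖ < 1) :
    HasSum (fun k : ℕ => ζ ^ (k + 2) • homogPart G (k + 2) v)
      (G (ζ • v) - G 0 - ζ • fderiv ℂ G 0 v) := by
  have h2 := (hasSum_nat_add_iff' 2).mpr (hasSum_homogPart hG h)
  rw [Finset.sum_range_succ, Finset.sum_range_one, homogPart_zero, homogPart_one hG, pow_zero,
    one_smul, pow_one, ← sub_sub] at h2
  exact h2

lemma norm_taylor_tail_le (hG : DifferentiableOn ℂ G (ball 0 1)) {A C ρ : ℝ} {v : X}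
    (hv : ‖v‖ = 1) (hρ0 : 0 ≤ ρ) (hρ1 : ρ < 1)
    (hhigh : ∀ k : ℕ, ‖homogPart G (k + 2) v‖ ≤
      (4 + 4 * (1 - Real.log 2) * k) * A + if k = 0 then C else 0) :
    ‖G ((ρ : ℂ) • v) - G 0 - (ρ : ℂ) • fderiv ℂ G 0 v‖
      ≤ C * ρ ^ 2 + 4 * A * ρ ^ 2 * (1 - ρ * Real.log 2) / (1 - ρ) ^ 2 := by
  have hsum := hasSum_homogPart_add_two hG (v := v) (ζ := (ρ : ℂ))
    (by rwa [hv, mul_one, Complex.norm_real, Real.norm_of_nonneg hρ0])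
  refine hsum.norm_le_of_bounded (hasSum_affine_geometric A C hρ0 hρ1) fun k => ?_
  rw [norm_smul, norm_pow, Complex.norm_real, Real.norm_of_nonneg hρ0]
  exact mul_le_mul_of_nonneg_left (hhigh k) (by positivity)

lemma norm_generator_sub_le (hG : DifferentiableOn ℂ G (ball 0 1))
    (hgen : ∀ z ∈ ball (0:X) 1, ∀ zs : X →L[ℂ] ℂ,
      zs z = (‖z‖ ^ 2 : ℂ) → ‖zs‖ = ‖z‖ →
      (zs (G z)).re ≤ (zs (G 0)).re * (1 - ‖z‖ ^ 2)) {V μ : ℝ} (hV0 : 0 ≤ V) (hμ0 : μ ≤ 0)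
    (hV : ∀ (v : X) (vs : X →L[ℂ] ℂ), ‖v‖ = 1 → vs v = 1 → ‖vs‖ = 1 →
      ‖vs (fderiv ℂ G 0 v)‖ ≤ V)
    (hμ : ∀ (v : X) (vs : X →L[ℂ] ℂ), ‖v‖ = 1 → vs v = 1 → ‖vs‖ = 1 →
      μ ≤ (vs (fderiv ℂ G 0 v)).re) {z : X} (hz : z ∈ ball (0:X) 1) :
    ‖G z - G 0‖ ≤ 4 * ‖z‖ ^ 2 * ‖G 0‖ + Real.exp 1 * ‖z‖ * V
      - 8 * μ * ‖z‖ ^ 2 * (1 - ‖z‖ * Real.log 2) / (1 - ‖z‖) ^ 2 := by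
  rw [mem_ball_zero_iff] at hz
  by_cases hz0 : ‖z‖ = 0
  · rw [norm_eq_zero] at hz0
    simp [hz0]
  have hρ0 : 0 ≤ ‖z‖ := norm_nonneg z
  have hρC : (‖z‖ : ℂ) ≠ 0 := by exact_mod_cast hz0
  obtain ⟨v, hv, hzv⟩ : ∃ v : X, ‖v‖ = 1 ∧ (‖z‖ : ℂ) • v = z :=
    ⟨(‖z‖ : ℂ)⁻¹ • z, by
      rw [norm_smul, norm_inv, Complex.norm_real, norm_norm, inv_mul_cancel₀ hz0],
      smul_inv_smul₀ hρC z⟩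
  have htail := norm_taylor_tail_le hG hv hρ0 hz
    (norm_homogPart_generator_le hG hgen hμ0 hμ hv)
  rw [hzv] at htail
  have hlin := mul_le_mul_of_nonneg_left (norm_fderiv_le_of_numerical_radius hG hV0 hV hv) hρ0
  have htri := norm_add_le (G z - G 0 - (‖z‖ : ℂ) • fderiv ℂ G 0 v)
    ((‖z‖ : ℂ) • fderiv ℂ G 0 v)
  rw [sub_add_cancel, norm_smul (‖z‖ : ℂ), Complex.norm_real, norm_norm] at htri
  refine (htri.trans (add_le_add htail hlin)).trans (le_of_eq ?_)
  ring

end Generator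

lemma exists_norm_le_of_growth_bound {X : Type*} [NormedAddCommGroup X] {G : X → X} {V μ : ℝ}
    (hV0 : 0 ≤ V) (hμ0 : μ ≤ 0)
    (main : ∀ z ∈ ball (0:X) 1, ‖G z - G 0‖ ≤ 4 * ‖z‖ ^ 2 * ‖G 0‖ + Real.exp 1 * ‖z‖ * V
      - 8 * μ * ‖z‖ ^ 2 * (1 - ‖z‖ * Real.log 2) / (1 - ‖z‖) ^ 2) {r : ℝ} (hr : r < 1) :
    ∃ M : ℝ, ∀ z : X, ‖z‖ ≤ r → ‖G z‖ ≤ M := by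
  refine ⟨‖G 0‖ + (4 * ‖G 0‖ + Real.exp 1 * V + 8 * (-μ) / (1 - r) ^ 2), fun z hz => ?_⟩
  have hL1 := Real.log_two_gt_d9
  have hL2 := Real.log_two_lt_d9
  have hz1 : ‖z‖ < 1 := hz.trans_lt hr
  have hz0 := norm_nonneg z
  have h := main z (by rwa [mem_ball_zero_iff])
  have h1 : ‖z‖ ^ 2 ≤ 1 := pow_le_one₀ hz0 hz1.le
  have h2 : 4 * ‖z‖ ^ 2 * ‖G 0‖ ≤ 4 * 1 * ‖G 0‖ := by gcongr
  have h3 : Real.exp 1 * ‖z‖ * V ≤ Real.exp 1 * 1 * V := by gcongr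
  have h4 : 8 * (-μ) * ‖z‖ ^ 2 * (1 - ‖z‖ * Real.log 2) / (1 - ‖z‖) ^ 2
      ≤ 8 * (-μ) * 1 * 1 / (1 - r) ^ 2 := by
    have hμ' : 0 ≤ -μ := by linarith
    have hlog : 0 ≤ ‖z‖ * Real.log 2 := by positivity
    have hlog' : 0 ≤ 1 - ‖z‖ * Real.log 2 := by nlinarith
    have hr' : 0 < 1 - r := by linarith
    gcongr
    linarith
  have h5 : -(8 * μ * ‖z‖ ^ 2 * (1 - ‖z‖ * Real.log 2) / (1 - ‖z‖) ^ 2)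
      = 8 * (-μ) * ‖z‖ ^ 2 * (1 - ‖z‖ * Real.log 2) / (1 - ‖z‖) ^ 2 := by ring
  have h6 := norm_sub_norm_le (G z) (G 0)
  rw [← h5] at h4
  simp only [mul_one] at h2 h3 h4
  linarith

theorem stmt9 {X : Type*} [NormedAddCommGroup X] [NormedSpace ℂ X] [CompleteSpace X]
    (G : X → X) (hG : DifferentiableOn ℂ G (ball 0 1))
    (hgen : ∀ z ∈ ball (0:X) 1, ∀ zs : X →L[ℂ] ℂ,
      zs z = (‖z‖ ^ 2 : ℂ) → ‖zs‖ = ‖z‖ →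
      (zs (G z)).re ≤ (zs (G 0)).re * (1 - ‖z‖ ^ 2)) :
    (∀ z ∈ ball (0:X) 1,
      ‖G z - G 0‖ ≤ 4 * ‖z‖ ^ 2 * ‖G 0‖
        + Real.exp 1 * ‖z‖ *
          sSup {x : ℝ | ∃ (v : X) (vs : X →L[ℂ] ℂ), ‖v‖ = 1 ∧ vs v = 1 ∧ ‖vs‖ = 1 ∧
            x = ‖vs (fderiv ℂ G 0 v)‖}
        - 8 * sInf {x : ℝ | ∃ (v : X) (vs : X →L[ℂ] ℂ), ‖v‖ = 1 ∧ vs v = 1 ∧ ‖vs‖ = 1 ∧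
            x = (vs (fderiv ℂ G 0 v)).re}
          * ‖z‖ ^ 2 * (1 - ‖z‖ * Real.log 2) / (1 - ‖z‖) ^ 2) ∧
    ∀ r : ℝ, r < 1 → ∃ M : ℝ, ∀ z : X, ‖z‖ ≤ r → ‖G z‖ ≤ M := by
  set V := sSup {x : ℝ | ∃ (v : X) (vs : X →L[ℂ] ℂ), ‖v‖ = 1 ∧ vs v = 1 ∧ ‖vs‖ = 1 ∧
    x = ‖vs (fderiv ℂ G 0 v)‖} with hVdef
  set μ := sInf {x : ℝ | ∃ (v : X) (vs : X →L[ℂ] ℂ), ‖v‖ = 1 ∧ vs v = 1 ∧ ‖vs‖ = 1 ∧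
    x = (vs (fderiv ℂ G 0 v)).re} with hμdef
  have hT : ∀ (v : X) (vs : X →L[ℂ] ℂ), ‖v‖ = 1 → ‖vs‖ = 1 →
      ‖vs (fderiv ℂ G 0 v)‖ ≤ ‖fderiv ℂ G 0‖ := fun v vs hv hvs => by
    have h1 := vs.le_opNorm (fderiv ℂ G 0 v)
    have h2 := (fderiv ℂ G 0).le_opNorm v
    rw [hvs, one_mul] at h1
    rw [hv, mul_one] at h2
    exact h1.trans h2
  have hV : ∀ (v : X) (vs : X →L[ℂ] ℂ), ‖v‖ = 1 → vs v = 1 → ‖vs‖ = 1 →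
      ‖vs (fderiv ℂ G 0 v)‖ ≤ V := fun v vs hv hvsv hvs => by
    refine le_csSup ⟨‖fderiv ℂ G 0‖, ?_⟩ ⟨v, vs, hv, hvsv, hvs, rfl⟩
    rintro _ ⟨w, ws, hw, -, hws, rfl⟩
    exact hT w ws hw hws
  have hμ : ∀ (v : X) (vs : X →L[ℂ] ℂ), ‖v‖ = 1 → vs v = 1 → ‖vs‖ = 1 →
      μ ≤ (vs (fderiv ℂ G 0 v)).re := fun v vs hv hvsv hvs => by
    refine csInf_le ⟨-‖fderiv ℂ G 0‖, ?_⟩ ⟨v, vs, hv, hvsv, hvs, rfl⟩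
    rintro _ ⟨w, ws, hw, -, hws, rfl⟩
    have h1 := (abs_le.mp (Complex.abs_re_le_norm (ws (fderiv ℂ G 0 w)))).1
    have h2 := hT w ws hw hws
    linarith
  have hV0 : 0 ≤ V := Real.sSup_nonneg (by rintro _ ⟨w, ws, -, -, -, rfl⟩; exact norm_nonneg _)
  have hμ0 : μ ≤ 0 := Real.sInf_nonpos (by
    rintro _ ⟨w, ws, hw, hwsw, hws, rfl⟩
    have h1 := (norm_nonneg _).trans (norm_coeff_generator_le hG hgen hw hwsw hws 0)
    linarith)
  have main := fun z (hz : z ∈ ball (0:X) 1) =>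
    norm_generator_sub_le hG hgen hV0 hμ0 hV hμ hz
  exact ⟨main, fun r hr => exists_norm_le_of_growth_bound hV0 hμ0 main hr⟩
end

section
/- Let D ⊂ ℂⁿ be a bounded balanced convex domain and let (G_n) be a sequence of infinitesimal generators on D such that ‖G_n(0)‖ + ‖DG_n(0)‖ ≤ C for all n and some constant C > 0. Then there is a subsequence of (G_n) converging uniformly on compact subsets of D to a holomorphic map G : D → ℂⁿ which is again an infinitesimal generator on D. -/
open Complex Metric

section NormalFamilies

open Set Filter Topology

section Holomorphic

variable {E F : Type*} [NormedAddCommGroup E] [NormedSpace ℂ E]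
  [NormedAddCommGroup F] [NormedSpace ℂ F]

/-- **Cauchy's estimate** for the Fréchet derivative. -/
lemma norm_fderiv_le_of_norm_le_ball {f : E → F} {c : E} {R M : ℝ}
    (hf : DifferentiableOn ℂ f (ball c R)) (hR : 0 < R) (hM : ∀ x ∈ ball c R, ‖f x‖ ≤ M) :
    ‖fderiv ℂ f c‖ ≤ 2 * M / R := by
  refine norm_fderiv_le_div_of_mapsTo_ball hf (fun x hx => ?_) hR
  rw [mem_closedBall, dist_eq_norm]
  linarith [norm_sub_le (f x) (f c), hM x hx, hM c (mem_ball_self hR)]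

/-- A bounded holomorphic map on a ball is Lipschitz on smaller concentric balls. -/
lemma norm_sub_le_of_norm_le_ball {f : E → F} {c : E} {R r M : ℝ}
    (hf : DifferentiableOn ℂ f (ball c R)) (hr : r < R) (hM : ∀ x ∈ ball c R, ‖f x‖ ≤ M)
    {x y : E} (hx : x ∈ closedBall c r) (hy : y ∈ closedBall c r) :
    ‖f x - f y‖ ≤ 2 * M / (R - r) * ‖x - y‖ := by
  refine (convex_closedBall c r).norm_image_sub_le_of_norm_fderiv_le (𝕜 := ℂ) (fun w hw => ?_)
    (fun w hw => ?_) hy hx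
  · exact hf.differentiableAt (isOpen_ball.mem_nhds (closedBall_subset_ball hr hw))
  · have hsub : ball w (R - r) ⊆ ball c R := ball_subset_ball' (by
      have := mem_closedBall.1 hw
      linarith)
    exact norm_fderiv_le_of_norm_le_ball (hf.mono hsub) (by linarith) fun v hv => hM v (hsub hv)

lemma exists_norm_le_and_lipschitz [ProperSpace E] {f : E → F} {c : E} {R r : ℝ}
    (hf : DifferentiableOn ℂ f (ball c R)) (hr : r < R) :
    ∃ M L : ℝ, 0 ≤ M ∧ 0 ≤ L ∧ (∀ x ∈ closedBall c r, ‖f x‖ ≤ M) ∧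
      ∀ x ∈ closedBall c r, ∀ y ∈ closedBall c r, ‖f x - f y‖ ≤ L * ‖x - y‖ := by
  obtain ⟨s, hrs, hsR⟩ := exists_between hr
  obtain ⟨M, hM⟩ := (isCompact_closedBall c s).exists_bound_of_continuousOn
    (hf.continuousOn.mono (closedBall_subset_ball hsR))
  have hM' : ∀ x ∈ closedBall c s, ‖f x‖ ≤ |M| := fun x hx => (hM x hx).trans (le_abs_self M)
  refine ⟨|M|, 2 * |M| / (s - r), abs_nonneg M,
    div_nonneg (by positivity) (by linarith),
    fun x hx => hM' x (closedBall_subset_closedBall hrs.le hx), fun x hx y hy => ?_⟩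
  exact norm_sub_le_of_norm_le_ball (hf.mono (ball_subset_ball hsR.le)) hrs
    (fun w hw => hM' w (ball_subset_closedBall hw)) hx hy

/-- **Weierstrass' theorem**: a locally uniform limit of holomorphic maps is holomorphic. -/
lemma differentiableOn_of_tendstoLocallyUniformlyOn [ProperSpace E] [CompleteSpace F]
    {f : ℕ → E → F} {g : E → F} {U : Set E} (hU : IsOpen U)
    (hf : ∀ k, DifferentiableOn ℂ (f k) U) (hfg : TendstoLocallyUniformlyOn f g atTop U) :
    DifferentiableOn ℂ g U := by
  intro x hx
  obtain ⟨R, hR, hRU⟩ := nhds_basis_closedBall.mem_iff.1 (hU.mem_nhds hx)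
  have hunif : TendstoUniformlyOn f g atTop (closedBall x R) :=
    (tendstoLocallyUniformlyOn_iff_forall_isCompact hU).1 hfg _ hRU (isCompact_closedBall x R)
  have hsub : ∀ y ∈ ball x (R / 2), ball y (R / 2) ⊆ closedBall x R := fun y hy =>
    (ball_subset_ball' (by linarith [mem_ball.1 hy])).trans ball_subset_closedBall
  have hcauchy : UniformCauchySeqOn (fun k => fderiv ℂ (f k)) atTop (ball x (R / 2)) := by
    rw [Metric.uniformCauchySeqOn_iff]
    intro ε hε
    obtain ⟨N, hN⟩ := Metric.uniformCauchySeqOn_iff.1 hunif.uniformCauchySeqOn (ε * R / 8)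
      (by positivity)
    refine ⟨N, fun m hm n hn y hy => ?_⟩
    have hd : ∀ k, DifferentiableAt ℂ (f k) y := fun k =>
      (hf k).differentiableAt (hU.mem_nhds (hRU (hsub y hy (mem_ball_self (by positivity)))))
    have h := norm_fderiv_le_of_norm_le_ball (f := f m - f n) (c := y) (R := R / 2)
      (M := ε * R / 8) (((hf m).sub (hf n)).mono ((hsub y hy).trans hRU)) (by positivity)
      (fun w hw => by
        have := hN m hm n hn w (hsub y hy hw)
        rw [dist_eq_norm] at this
        exact this.le)
    rw [fderiv_sub (hd m) (hd n)] at h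
    rw [dist_eq_norm]
    refine h.trans_lt ?_
    have : 2 * (ε * R / 8) / (R / 2) = ε / 2 := by field_simp; norm_num
    linarith
  have hlim : ∀ y ∈ ball x (R / 2), ∃ l, Tendsto (fun k => fderiv ℂ (f k) y) atTop (𝓝 l) :=
    fun y hy => cauchySeq_tendsto_of_complete (hcauchy.cauchySeq hy)
  choose! g' hg' using hlim
  refine (hasFDerivAt_of_tendstoUniformlyOn (f := f) isOpen_ball
    (hcauchy.tendstoUniformlyOn_of_tendsto hg') (fun k y hy => ?_) (fun y hy => ?_)
    (mem_ball_self (half_pos hR))).differentiableAt.differentiableWithinAt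
  · exact ((hf k).differentiableAt
      (hU.mem_nhds (hRU (hsub y hy (mem_ball_self (by positivity)))))).hasFDerivAt
  · exact hunif.tendsto_at (hsub y hy (mem_ball_self (by positivity)))

/-- **Montel's theorem** on a ball. -/
lemma exists_subseq_tendstoLocallyUniformlyOn_ball [ProperSpace E] [ProperSpace F]
    {f : ℕ → E → F} {c : E} {R : ℝ} (hf : ∀ k, DifferentiableOn ℂ (f k) (ball c R))
    (hbd : ∀ r < R, ∃ M, ∀ k, ∀ x ∈ closedBall c r, ‖f k x‖ ≤ M) :
    ∃ φ : ℕ → ℕ, StrictMono φ ∧ ∃ g : E → F, DifferentiableOn ℂ g (ball c R) ∧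
      TendstoLocallyUniformlyOn (fun k => f (φ k)) g atTop (ball c R) := by
  have : LocallyCompactSpace (ball c R) := isOpen_ball.locallyCompactSpace
  let h : ℕ → C(ball c R, F) := fun k =>
    ⟨(ball c R).domRestrict (f k), (hf k).continuousOn.domRestrict⟩
  have hh : ∀ k (x : ball c R), h k x = f k x := fun _ _ => rfl
  have heq : Equicontinuous (fun k => (h k : ball c R → F)) := by
    intro x
    obtain ⟨r, hxr, hr⟩ := exists_between (mem_ball.1 x.2)
    obtain ⟨s, hrs, hsR⟩ := exists_between hr
    obtain ⟨M, hM⟩ := hbd s hsR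
    have hM0 : 0 ≤ M := (norm_nonneg _).trans (hM 0 x (mem_closedBall.2 (hxr.le.trans hrs.le)))
    have hL : 0 ≤ 2 * M / (s - r) := div_nonneg (by positivity) (by linarith)
    refine Metric.equicontinuousAt_of_continuity_modulus
      (fun y : ball c R => 2 * M / (s - r) * dist x y) ?_ _ ?_
    · have : Continuous fun y : ball c R => 2 * M / (s - r) * dist x y := by fun_prop
      simpa using this.tendsto x
    · have hnear : ∀ᶠ y : ball c R in 𝓝 x, dist (y : E) c < r :=
        (continuous_subtype_val.dist continuous_const).continuousAt.eventually_lt_const hxr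
      filter_upwards [hnear] with y hy k
      rw [dist_eq_norm, hh, hh, Subtype.dist_eq, dist_eq_norm]
      exact norm_sub_le_of_norm_le_ball ((hf k).mono (ball_subset_ball hsR.le)) hrs
        (fun w hw => hM k w (ball_subset_closedBall hw)) (mem_closedBall.2 hxr.le)
        (mem_closedBall.2 hy.le)
  have hcomp : IsCompact (closure (range h)) := by
    refine ArzelaAscoli.isCompact_closure_of_isClosedEmbedding (𝔖 := {K | IsCompact K})
      (F := fun f : C(ball c R, F) => (f : ball c R → F)) (fun K hK => hK) ?_ ?_ ?_
    · refine ⟨ContinuousMap.isUniformEmbedding_toUniformOnFunIsCompact.isEmbedding, ?_⟩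
      change IsClosed (range ContinuousMap.toUniformOnFunIsCompact)
      rw [ContinuousMap.range_toUniformOnFunIsCompact]
      exact UniformOnFun.isClosed_setOfPred_continuous
        CompactlyCoherentSpace.isCoherentWith
    · rintro K -
      refine Equicontinuous.equicontinuousOn (fun x V hV => ?_) K
      filter_upwards [heq x V hV] with y hy
      rintro ⟨-, k, rfl⟩
      exact hy k
    · rintro K - x -
      obtain ⟨M, hM⟩ := hbd (dist (x : E) c) (mem_ball.1 x.2)
      refine ⟨closedBall 0 M, isCompact_closedBall 0 M, ?_⟩
      rintro - ⟨k, rfl⟩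
      exact mem_closedBall_zero_iff.2 (hM k x (mem_closedBall.2 le_rfl))
  obtain ⟨g, -, φ, hφ, hg⟩ := hcomp.tendsto_subseq (fun k => subset_closure (mem_range_self k))
  have hloc : TendstoLocallyUniformlyOn (fun k => f (φ k))
      (Function.extend Subtype.val g 0) atTop (ball c R) := by
    rw [tendstoLocallyUniformlyOn_iff_tendstoLocallyUniformly_comp_coe]
    rw [Function.extend_comp Subtype.val_injective]
    exact ContinuousMap.tendsto_iff_tendstoLocallyUniformly.1 hg
  exact ⟨φ, hφ, _, differentiableOn_of_tendstoLocallyUniformlyOn isOpen_ball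
    (fun k => hf (φ k)) hloc, hloc⟩

end Holomorphic

section Euler

/-- A trajectory staying in a ball stays in a smaller closed ball during a bounded time. -/
lemma exists_lt_forall_norm_le {F : Type*} [NormedAddCommGroup F]
    {u : ℝ → F} {T : ℝ} (hu : ContinuousOn u (Icc 0 T))
    (hmem : ∀ t ∈ Icc 0 T, u t ∈ ball (0 : F) 1) :
    ∃ r < 1, 0 ≤ r ∧ ∀ t ∈ Icc 0 T, ‖u t‖ ≤ r := by
  rcases (Icc 0 T).eq_empty_or_nonempty with h | h
  · exact ⟨0, one_pos, le_rfl, by simp [h]⟩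
  · obtain ⟨t, ht, hmax⟩ := isCompact_Icc.exists_isMaxOn h hu.norm
    exact ⟨‖u t‖, mem_ball_zero_iff.1 (hmem t ht), norm_nonneg _, fun τ hτ => hmax hτ⟩

variable {F : Type*} [NormedAddCommGroup F] [NormedSpace ℂ F]

/-- One step of length `s` of the explicit Euler scheme for the vector field `G`. -/
def eulerStep (G : F → F) (s : ℂ) (x : F) : F := x + s • G x

/-- Error estimate for the Euler scheme started near a trajectory `u`. -/
lemma norm_iterate_eulerStep_sub_le {G : F → F} {u : ℝ → F} {s L K δ : ℝ} {N : ℕ} {x : F}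
    (hs : 0 ≤ s) (hL : 0 ≤ L) (hK : 0 ≤ K)
    (hG : ∀ j < N, ∀ y, ‖y - u (j * s)‖ ≤ δ → ‖G y - G (u (j * s))‖ ≤ L * ‖y - u (j * s)‖)
    (hu : ∀ j < N, ‖u ((j + 1) * s) - u (j * s) - (s : ℂ) • G (u (j * s))‖ ≤ K * s ^ 2)
    (hx : (‖x - u 0‖ + K * (N * s) * s) * Real.exp (L * (N * s)) ≤ δ) :
    ∀ j ≤ N, ‖(eulerStep G s)^[j] x - u (j * s)‖ ≤
      (‖x - u 0‖ + K * (j * s) * s) * Real.exp (L * (j * s)) := by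
  intro j
  induction j with
  | zero => intro _; simp
  | succ j ih =>
    intro hj
    have hjN : j < N := hj
    have hj' : (j : ℝ) ≤ N := by exact_mod_cast hjN.le
    have ih := ih hjN.le
    rw [Function.iterate_succ_apply']
    set y := (eulerStep G s)^[j] x with hy
    have hyδ : ‖y - u (j * s)‖ ≤ δ := ih.trans (le_trans (by gcongr) hx)
    have h1 : ‖eulerStep G s y - u ((j + 1) * s)‖ ≤ ‖y - u (j * s)‖ +
        s * (L * ‖y - u (j * s)‖) + K * s ^ 2 := by
      have : eulerStep G s y - u ((j + 1) * s) = (y - u (j * s)) + (s : ℂ) • (G y - G (u (j * s)))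
          - (u ((j + 1) * s) - u (j * s) - (s : ℂ) • G (u (j * s))) := by
        simp only [eulerStep, smul_sub]; abel
      rw [this]
      refine (norm_sub_le _ _).trans (add_le_add ((norm_add_le _ _).trans ?_) (hu j hjN))
      rw [norm_smul, Complex.norm_real, Real.norm_of_nonneg hs]
      gcongr
      exact hG j hjN y hyδ
    push_cast
    set e := ‖y - u (j * s)‖
    set a := ‖x - u 0‖
    have ha : 0 ≤ a := norm_nonneg _
    have hexp : Real.exp (L * ((j + 1) * s)) = Real.exp (L * (j * s)) * Real.exp (L * s) := by
      rw [← Real.exp_add]; ring_nf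
    have h2 : 1 + L * s ≤ Real.exp (L * s) := by linarith [Real.add_one_le_exp (L * s)]
    have h3 : 1 ≤ Real.exp (L * ((j + 1) * s)) := Real.one_le_exp (by positivity)
    calc ‖eulerStep G s y - u ((j + 1) * s)‖ ≤ e * (1 + L * s) + K * s ^ 2 := by linarith
      _ ≤ ((a + K * (j * s) * s) * Real.exp (L * (j * s))) * Real.exp (L * s)
          + K * s ^ 2 * Real.exp (L * ((j + 1) * s)) := by
          exact add_le_add (by gcongr) (le_mul_of_one_le_right (by positivity) h3)
      _ = _ := by rw [hexp]; ring

/-- The local truncation error of the Euler scheme along a trajectory is quadratic. -/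
lemma norm_sub_sub_smul_le_of_hasDerivAt {G : F → F} {u : ℝ → F} {T M L : ℝ} {S : Set F}
    (hL : 0 ≤ L) (hM : ∀ x ∈ S, ‖G x‖ ≤ M)
    (hG : ∀ x ∈ S, ∀ y ∈ S, ‖G x - G y‖ ≤ L * ‖x - y‖)
    (hu : ∀ t ∈ Icc 0 T, u t ∈ S ∧ HasDerivAt u (G (u t)) t)
    {t s : ℝ} (ht : 0 ≤ t) (hs : 0 ≤ s) (hts : t + s ≤ T) :
    ‖u (t + s) - u t - (s : ℂ) • G (u t)‖ ≤ L * M * s ^ 2 := by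
  have hsub : ∀ τ ∈ Icc t (t + s), τ ∈ Icc 0 T := fun τ hτ => ⟨ht.trans hτ.1, hτ.2.trans hts⟩
  have hmem : t ∈ Icc t (t + s) := ⟨le_rfl, by linarith⟩
  have hM0 : 0 ≤ M := (norm_nonneg _).trans (hM _ (hu t (hsub t hmem)).1)
  have hlip : ∀ τ ∈ Icc t (t + s), ‖u τ - u t‖ ≤ M * (τ - t) :=
    norm_image_sub_le_of_norm_deriv_le_segment'
      (fun τ hτ => (hu τ (hsub τ hτ)).2.hasDerivWithinAt)
      fun τ hτ => hM _ (hu τ (hsub τ (Ico_subset_Icc_self hτ))).1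
  have hder : ∀ τ ∈ Icc t (t + s), HasDerivWithinAt (fun τ => u τ - (τ - t) • G (u t))
      (G (u τ) - G (u t)) (Icc t (t + s)) τ := fun τ hτ => by
    have h := ((hasDerivAt_id τ).sub_const t).smul_const (G (u t))
    simpa using! ((hu τ (hsub τ hτ)).2.sub h).hasDerivWithinAt
  have h := norm_image_sub_le_of_norm_deriv_le_segment' hder (C := L * (M * s)) (fun τ hτ => by
    have hτ' := Ico_subset_Icc_self hτ
    refine (hG _ (hu τ (hsub τ hτ')).1 _ (hu t (hsub t hmem)).1).trans ?_
    gcongr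
    exact (hlip τ hτ').trans (by gcongr; linarith [hτ.2])) (t + s) ⟨by linarith, le_rfl⟩
  have e : u (t + s) - u t - (s : ℂ) • G (u t) =
      u (t + s) - (t + s - t) • G (u t) - (u t - (t - t) • G (u t)) := by
    simp only [sub_self, zero_smul, sub_zero, add_sub_cancel_left, Complex.coe_smul]; abel
  rw [e]
  exact h.trans (by apply le_of_eq; ring)

/-- Uniform error bound for the Euler scheme in a neighbourhood of a trajectory. -/
lemma exists_euler_error [ProperSpace F] {G : F → F} {u : ℝ → F} {T : ℝ} (hT : 0 ≤ T)
    (hGd : DifferentiableOn ℂ G (ball 0 1))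
    (hu : ∀ t ∈ Icc 0 T, u t ∈ ball (0 : F) 1 ∧ HasDerivAt u (G (u t)) t) :
    ∃ A δ : ℝ, 0 < A ∧ 0 < δ ∧ ∃ r < 1, ∀ N : ℕ, 0 < N → ∀ x,
      A * (‖x - u 0‖ + A / N) ≤ δ → ∀ j ≤ N,
        (eulerStep G ((T / N : ℝ) : ℂ))^[j] x ∈ closedBall 0 r ∧
        ‖(eulerStep G ((T / N : ℝ) : ℂ))^[j] x - u (j * (T / N))‖ ≤ A * (‖x - u 0‖ + A / N) := by
  obtain ⟨r, hr1, hr0, hr⟩ := exists_lt_forall_norm_le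
    (fun t ht => (hu t ht).2.continuousAt.continuousWithinAt) (fun t ht => (hu t ht).1)
  obtain ⟨r', hrr', hr'1⟩ := exists_between hr1
  obtain ⟨M, L, hM0, hL0, hM, hL⟩ := exists_norm_le_and_lipschitz hGd hr'1
  have hball : ∀ t ∈ Icc 0 T, u t ∈ closedBall (0 : F) r' := fun t ht =>
    mem_closedBall_zero_iff.2 ((hr t ht).trans hrr'.le)
  set A : ℝ := Real.exp (L * T) + L * M * T * T + 1
  have hA1 : Real.exp (L * T) ≤ A := by
    have : 0 ≤ L * M * T * T := by positivity
    linarith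
  have hA2 : L * M * T * T ≤ A := by linarith [Real.exp_pos (L * T)]
  have hApos : 0 < A := (Real.exp_pos _).trans_le hA1
  refine ⟨A, r' - r, hApos, by linarith, r', hr'1, fun N hN x hx => ?_⟩
  have hN' : (0 : ℝ) < N := by exact_mod_cast hN
  set s := T / N with hs
  have hs0 : 0 ≤ s := by positivity
  have hNs : N * s = T := by rw [hs]; field_simp
  have hjs : ∀ j : ℕ, j ≤ N → (j : ℝ) * s ∈ Icc 0 T := fun j hj => by
    refine ⟨by positivity, ?_⟩
    rw [← hNs]
    gcongr
  have hcmp : ∀ j : ℕ, j ≤ N → (‖x - u 0‖ + L * M * (j * s) * s) * Real.exp (L * (j * s)) ≤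
      A * (‖x - u 0‖ + A / N) := fun j hj => by
    rw [mul_comm]
    have h1 := (hjs j hj).2
    have h2 := (hjs j hj).1
    gcongr
    · exact (Real.exp_le_exp.2 (by gcongr)).trans hA1
    · calc L * M * (j * s) * s ≤ L * M * T * s := by gcongr
        _ = L * M * T * T / N := by rw [hs]; ring
        _ ≤ A / N := by gcongr
  have key := norm_iterate_eulerStep_sub_le (G := G) (u := u) (N := N) (x := x) (δ := r' - r)
    (K := L * M) hs0 hL0 (by positivity)
    (fun j hj y hy => hL y (by
      rw [mem_closedBall_zero_iff]
      have := norm_le_norm_sub_add y (u (j * s))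
      linarith [hr _ (hjs j hj.le)]) _ (hball _ (hjs j hj.le)))
    (fun j hj => by
      have := norm_sub_sub_smul_le_of_hasDerivAt (T := T) hL0 hM hL
        (fun t ht => ⟨hball t ht, (hu t ht).2⟩) (hjs j hj.le).1 hs0
        (by have := (hjs (j + 1) hj).2; push_cast at this; linarith)
      rwa [show (j : ℝ) * s + s = (j + 1) * s by ring] at this)
    ((hcmp N le_rfl).trans hx)
  intro j hj
  have hj1 := (key j hj).trans (hcmp j hj)
  refine ⟨?_, hj1⟩
  rw [mem_closedBall_zero_iff]
  have := norm_le_norm_sub_add ((eulerStep G (s : ℂ))^[j] x) (u (j * s))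
  linarith [hr _ (hjs j hj)]

lemma differentiableOn_iterate_eulerStep {G : F → F} {U V : Set F} {s : ℂ} {N : ℕ}
    (hG : DifferentiableOn ℂ G V) (hmem : ∀ x ∈ U, ∀ j < N, (eulerStep G s)^[j] x ∈ V) :
    DifferentiableOn ℂ (eulerStep G s)^[N] U := by
  have hstep : DifferentiableOn ℂ (eulerStep G s) V :=
    differentiableOn_id.add (hG.const_smul s)
  induction N with
  | zero => simpa using differentiableOn_id
  | succ j ih =>
    rw [Function.iterate_succ']
    exact hstep.comp (ih fun x hx i hi => hmem x hx i (hi.trans (Nat.lt_succ_self j)))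
      fun x hx => hmem x hx j (Nat.lt_succ_self j)

/-- The time-`T` map of a holomorphic semiflow is holomorphic. -/
lemma differentiableOn_flow [FiniteDimensional ℂ F] {G : F → F} {Φ : F → ℝ → F}
    (hGd : DifferentiableOn ℂ G (ball 0 1)) (hΦ0 : ∀ z ∈ ball (0 : F) 1, Φ z 0 = z)
    (hΦ : ∀ z ∈ ball (0 : F) 1, ∀ t, 0 ≤ t →
      Φ z t ∈ ball (0 : F) 1 ∧ HasDerivAt (Φ z) (G (Φ z t)) t)
    {T : ℝ} (hT : 0 ≤ T) : DifferentiableOn ℂ (fun z => Φ z T) (ball 0 1) := by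
  have : ProperSpace F := FiniteDimensional.proper ℂ F
  intro z₀ hz₀
  obtain ⟨A, δ, hA, hδ, r, hr, hE⟩ := exists_euler_error hT hGd fun t ht => hΦ z₀ hz₀ t ht.1
  rw [hΦ0 z₀ hz₀] at hE
  obtain ⟨ε₁, hε₁, hball⟩ := Metric.isOpen_ball.mem_nhds hz₀ |> Metric.mem_nhds_iff.1
  set ε := min ε₁ (δ / (2 * A))
  have hε : 0 < ε := by positivity
  have hlimA : ∀ A c : ℝ, Tendsto (fun N : ℕ => A * (c + A / N)) atTop (𝓝 (A * (c + 0))) :=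
    fun A c => ((tendsto_const_div_atTop_nhds_zero_nat A).const_add c).const_mul A
  obtain ⟨N₀, hN₀⟩ := eventually_atTop.1
    ((eventually_gt_atTop 0).and ((hlimA A (δ / (2 * A))).eventually_lt_const
      (u := δ) (by field_simp; linarith)))
  have hE' : ∀ k, ∀ x ∈ ball z₀ ε, ∀ j ≤ k + N₀,
      (eulerStep G ((T / (k + N₀ : ℕ) : ℝ) : ℂ))^[j] x ∈ closedBall 0 r := by
    intro k x hx j hj
    obtain ⟨h0, h1⟩ := hN₀ (k + N₀) (Nat.le_add_left _ _)
    refine (hE (k + N₀) h0 x (le_trans ?_ h1.le) j hj).1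
    gcongr
    rw [← dist_eq_norm]
    exact (mem_ball.1 hx).le.trans (min_le_right _ _)
  obtain ⟨φ, hφ, g, hgd, hg⟩ := exists_subseq_tendstoLocallyUniformlyOn_ball
    (f := fun k => (eulerStep G ((T / (k + N₀ : ℕ) : ℝ) : ℂ))^[k + N₀]) (c := z₀) (R := ε)
    (fun k => differentiableOn_iterate_eulerStep hGd
      fun x hx j hj => closedBall_subset_ball hr (hE' k x hx j hj.le))
    (fun ρ hρ => ⟨r, fun k x hx => mem_closedBall_zero_iff.1
      (hE' k x (closedBall_subset_ball hρ hx) _ le_rfl)⟩)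
  have heq : EqOn g (fun z => Φ z T) (ball z₀ ε) := by
    intro x hx
    refine tendsto_nhds_unique (hg.tendsto_at hx) ?_
    have hx1 : x ∈ ball (0 : F) 1 := hball (ball_subset_ball (min_le_left _ _) hx)
    obtain ⟨B, η, hB, hη, _, _, hEx⟩ := exists_euler_error hT hGd fun t ht => hΦ x hx1 t ht.1
    rw [hΦ0 x hx1] at hEx
    have hlim : Tendsto (fun N : ℕ => B * (‖x - x‖ + B / N)) atTop (𝓝 0) := by
      simpa using hlimA B 0
    have hconv : Tendsto (fun N : ℕ => (eulerStep G ((T / N : ℝ) : ℂ))^[N] x) atTop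
        (𝓝 (Φ x T)) := by
      rw [tendsto_iff_norm_sub_tendsto_zero]
      refine squeeze_zero' (Eventually.of_forall fun _ => norm_nonneg _) ?_ hlim
      filter_upwards [eventually_gt_atTop 0, hlim.eventually_le_const hη] with N hN hN'
      have h := (hEx N hN x hN' N le_rfl).2
      rwa [mul_div_cancel₀ T (by positivity)] at h
    exact hconv.comp ((tendsto_add_atTop_nat N₀).comp hφ.tendsto_atTop)
  exact ((hgd.congr fun x hx => (heq hx).symm).differentiableAt
    (ball_mem_nhds z₀ hε)).differentiableWithinAt

end Euler

section Generator

open scoped ComplexConjugate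

/-- **Schwarz–Pick lemma** comparing a point with the origin. -/
lemma norm_sub_le_of_mapsTo_unit_ball {f : ℂ → ℂ} (hf : DifferentiableOn ℂ f (ball 0 1))
    (hmaps : MapsTo f (ball 0 1) (ball 0 1)) {ζ : ℂ} (hζ : ζ ∈ ball (0 : ℂ) 1) :
    ‖f ζ - f 0‖ ≤ ‖ζ‖ * ‖1 - conj (f 0) * f ζ‖ := by
  set a := f 0 with ha
  have ha1 : ‖a‖ < 1 := mem_ball_zero_iff.1 (hmaps (mem_ball_self one_pos))
  have hden : ∀ w : ℂ, ‖w‖ < 1 → 0 < ‖1 - conj a * w‖ := fun w hw => by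
    refine norm_pos_iff.2 (sub_ne_zero.2 fun h => ?_)
    have h1 : ‖conj a * w‖ = 1 := by rw [← h, norm_one]
    rw [norm_mul, RCLike.norm_conj] at h1
    nlinarith [norm_nonneg a, norm_nonneg w]
  have hnum : ∀ w : ℂ, ‖w‖ < 1 → ‖w - a‖ ≤ ‖1 - conj a * w‖ := fun w hw => by
    refine le_of_sq_le_sq ?_ (norm_nonneg _)
    have h1 : ‖1 - conj a * w‖ ^ 2 - ‖w - a‖ ^ 2 = (1 - ‖a‖ ^ 2) * (1 - ‖w‖ ^ 2) := by
      simp only [← Complex.normSq_eq_norm_sq, Complex.normSq_apply, Complex.sub_re, Complex.sub_im,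
        Complex.mul_re, Complex.mul_im, Complex.conj_re, Complex.conj_im, Complex.one_re,
        Complex.one_im]
      ring
    have h2 : 0 ≤ 1 - ‖a‖ ^ 2 := by nlinarith [norm_nonneg a]
    have h3 : 0 ≤ 1 - ‖w‖ ^ 2 := by nlinarith [norm_nonneg w]
    nlinarith [mul_nonneg h2 h3]
  have hf1 : ∀ w ∈ ball (0 : ℂ) 1, ‖f w‖ < 1 := fun w hw => mem_ball_zero_iff.1 (hmaps hw)
  have h := norm_le_norm_of_mapsTo_ball (f := fun w => (f w - a) / (1 - conj a * f w)) (R := 1)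
    ((hf.sub_const a).div ((hf.const_mul _).const_sub 1)
      fun w hw => norm_pos_iff.1 (hden _ (hf1 w hw)))
    (fun w hw => by
      rw [mem_closedBall_zero_iff, norm_div]
      exact div_le_one_of_le₀ (hnum _ (hf1 w hw)) (norm_nonneg _))
    (by simp [ha]) (mem_ball_zero_iff.1 hζ)
  rwa [norm_div, div_le_iff₀ (hden _ (hf1 ζ hζ))] at h

variable {F : Type*} [NormedAddCommGroup F] [NormedSpace ℂ F]

/-- A holomorphic vector field on the unit ball whose forward trajectories exist for all times. -/
structure IsUnitBallGenerator (G : F → F) : Prop where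
  differentiableOn : DifferentiableOn ℂ G (ball 0 1)
  exists_trajectory : ∀ z₀ ∈ ball (0 : F) 1, ∃ u : ℝ → F, u 0 = z₀ ∧
    ∀ t : ℝ, 0 ≤ t → u t ∈ ball (0 : F) 1 ∧ HasDerivAt u (G (u t)) t

lemma smul_mem_unit_ball {e : F} (he : ‖e‖ ≤ 1) {ζ : ℂ} (hζ : ζ ∈ ball (0 : ℂ) 1) :
    ζ • e ∈ ball (0 : F) 1 := by
  rw [mem_ball_zero_iff, norm_smul]
  have h := mem_ball_zero_iff.1 hζ
  exact (mul_le_of_le_one_right (norm_nonneg _) he).trans_lt h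

lemma IsUnitBallGenerator.re_conj_mul_le [FiniteDimensional ℂ F] {G : F → F}
    (hG : IsUnitBallGenerator G) {l : F →L[ℂ] ℂ} (hl : ‖l‖ ≤ 1) {e : F} (he : ‖e‖ ≤ 1)
    (hle : l e = 1) {ζ : ℂ} (hζ : ζ ∈ ball (0 : ℂ) 1) :
    (conj ζ * l (G (ζ • e))).re ≤ (conj ζ * l (G 0)).re * (1 - ‖ζ‖ ^ 2) := by
  choose! Φ hΦ0 hΦ using hG.exists_trajectory
  have h0 : (0 : F) ∈ ball (0 : F) 1 := mem_ball_self one_pos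
  have hζe := smul_mem_unit_ball he hζ
  set a : ℝ → ℂ := fun h => l (Φ 0 h)
  set b : ℝ → ℂ := fun h => l (Φ (ζ • e) h)
  have ha0 : a 0 = 0 := by simp [a, hΦ0 0 h0]
  have hb0 : b 0 = ζ := by simp [b, hΦ0 _ hζe, hle]
  have hda : HasDerivAt a (l (G 0)) 0 := by
    have h := (hΦ 0 h0 0 le_rfl).2
    rw [hΦ0 0 h0] at h
    exact (l.restrictScalars ℝ).hasFDerivAt.comp_hasDerivAt 0 h
  have hdb : HasDerivAt b (l (G (ζ • e))) 0 := by
    have h := (hΦ _ hζe 0 le_rfl).2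
    rw [hΦ0 _ hζe] at h
    exact (l.restrictScalars ℝ).hasFDerivAt.comp_hasDerivAt 0 h
  have hineq : ∀ h, 0 ≤ h → ‖b h - a h‖ ^ 2 ≤ ‖ζ‖ ^ 2 * ‖1 - conj (a h) * b h‖ ^ 2 := by
    intro h hh
    rw [← mul_pow]
    gcongr
    have hd : DifferentiableOn ℂ (fun w : ℂ => l (Φ (w • e) h)) (ball 0 1) :=
      l.differentiable.comp_differentiableOn
        ((differentiableOn_flow hG.differentiableOn hΦ0 hΦ hh).comp
          (f := fun w : ℂ => w • e) (by fun_prop) fun w hw => smul_mem_unit_ball he hw)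
    have := norm_sub_le_of_mapsTo_unit_ball hd (fun w hw => by
      rw [mem_ball_zero_iff]
      have h1 := mem_ball_zero_iff.1 (hΦ _ (smul_mem_unit_ball he hw) h hh).1
      exact ((l.le_of_opNorm_le hl _).trans_eq (one_mul _)).trans_lt h1) hζ
    simpa [a, b] using this
  set q : ℝ → ℝ := fun h => ‖ζ‖ ^ 2 * ‖1 - conj (a h) * b h‖ ^ 2 - ‖b h - a h‖ ^ 2
  have hq0 : q 0 = 0 := by simp [q, ha0, hb0]
  have hdq : HasDerivAt q (2 * ((conj ζ * l (G 0)).re * (1 - ‖ζ‖ ^ 2)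
      - (conj ζ * l (G (ζ • e))).re)) 0 := by
    have h1 := (((hda.star.mul hdb).const_sub 1).norm_sq.const_mul (‖ζ‖ ^ 2)).sub
      (hdb.sub hda).norm_sq
    refine HasDerivAt.congr_deriv (f := q) h1 ?_
    simp only [Complex.inner, Pi.sub_apply, Pi.mul_apply, ha0, hb0, ← Complex.normSq_eq_norm_sq]
    simp [Complex.normSq_apply]
    ring
  have hlim := hdq.tendsto_slope_zero_right
  have h0 := ge_of_tendsto hlim (by
    filter_upwards [self_mem_nhdsWithin] with t ht
    have ht0 : (0 : ℝ) < t := ht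
    rw [hq0, zero_add, sub_zero, smul_eq_mul]
    exact mul_nonneg (by positivity) (sub_nonneg.2 (hineq t ht0.le)))
  linarith

lemma IsUnitBallGenerator.norm_apply_smul_le [FiniteDimensional ℂ F] {G : F → F}
    (hG : IsUnitBallGenerator G) {C : ℝ} (hC0 : ‖G 0‖ ≤ C) (hC1 : ‖fderiv ℂ G 0‖ ≤ C)
    {l : F →L[ℂ] ℂ} (hl : ‖l‖ ≤ 1) {e : F} (he : ‖e‖ ≤ 1) (hle : l e = 1)
    {r : ℝ} (hr : r < 1) {ζ : ℂ} (hζ : ‖ζ‖ ≤ r) :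
    ‖l (G (ζ • e))‖ ≤ 2 * C + (4 * C + 2) / (1 - r) := by
  have hl' : ∀ w, ‖l w‖ ≤ ‖w‖ := fun w => (l.le_of_opNorm_le hl w).trans_eq (one_mul _)
  have hC : 0 ≤ C := (norm_nonneg _).trans hC0
  set f : ℂ → ℂ := fun w => l (G (w • e))
  have hfd : DifferentiableOn ℂ f (ball 0 1) :=
    l.differentiable.comp_differentiableOn (hG.differentiableOn.comp
      (f := fun w : ℂ => w • e) (by fun_prop) fun w hw => smul_mem_unit_ball he hw)
  have hf0 : f 0 = l (G 0) := by simp [f]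
  have hf0C : ‖f 0‖ ≤ C := by rw [hf0]; exact (hl' _).trans hC0
  have hfderiv : HasDerivAt f (l (fderiv ℂ G 0 e)) 0 := by
    have h1 : HasFDerivAt G (fderiv ℂ G 0) ((0 : ℂ) • e) := by
      rw [zero_smul]
      exact (hG.differentiableOn.differentiableAt (ball_mem_nhds 0 one_pos)).hasFDerivAt
    have h2 : HasDerivAt (fun w : ℂ => w • e) e 0 := by
      simpa using (hasDerivAt_id (0 : ℂ)).smul_const e
    exact l.hasFDerivAt.comp_hasDerivAt 0 (h1.comp_hasDerivAt 0 h2)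
  set p : ℂ → ℂ := fun w => f w - f 0 + conj (f 0) * w ^ 2
  have hp0 : p 0 = 0 := by simp [p]
  have hpd : DifferentiableOn ℂ p (ball 0 1) := (hfd.sub_const _).add (by fun_prop)
  have hpderiv : deriv p 0 = l (fderiv ℂ G 0 e) := by
    have h := (hfderiv.sub_const (f 0)).add (((hasDerivAt_id (0 : ℂ)).pow 2).const_mul
      (conj (f 0)))
    simpa using! h.deriv
  have hpderivC : ‖dslope p 0 0‖ ≤ C := by
    rw [dslope_same, hpderiv]
    calc ‖l (fderiv ℂ G 0 e)‖ ≤ ‖fderiv ℂ G 0 e‖ := hl' _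
      _ ≤ ‖fderiv ℂ G 0‖ * ‖e‖ := ContinuousLinearMap.le_opNorm _ _
      _ ≤ C * 1 := by gcongr
      _ = C := mul_one C
  have hζ1 : ‖ζ‖ < 1 := hζ.trans_lt hr
  have hbc := borelCaratheodory (f := dslope p 0) (M := C + 1) (R := 1) (by positivity)
    ((differentiableOn_dslope (ball_mem_nhds 0 one_pos)).2 hpd) (fun w hw => by
      change (dslope p 0 w).re ≤ C + 1
      rcases eq_or_ne w 0 with rfl | hw0
      · linarith [Complex.re_le_norm (dslope p 0 0)]
      · have hre := hG.re_conj_mul_le hl he hle hw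
        rw [← hf0] at hre
        change (conj w * f w).re ≤ _ at hre
        have hN : 0 < Complex.normSq w := Complex.normSq_pos.2 hw0
        have hds : dslope p 0 w = p w / w := by
          rw [dslope_of_ne _ hw0, slope_def_field, hp0]; simp
        have hle0 : (dslope p 0 w).re ≤ 0 := by
          have : (dslope p 0 w).re = (conj w * p w).re / Complex.normSq w := by
            rw [hds, Complex.div_re]
            simp only [Complex.mul_re, Complex.conj_re, Complex.conj_im]
            ring
          rw [this]
          refine div_nonpos_of_nonpos_of_nonneg ?_ hN.le
          have e1 : (conj w * p w).re = (conj w * f w).re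
              - (conj w * f 0).re * (1 - ‖w‖ ^ 2) := by
            rw [← Complex.normSq_eq_norm_sq]
            simp only [p, Complex.normSq_apply, Complex.mul_re, Complex.mul_im, Complex.conj_re,
              Complex.conj_im, Complex.add_re, Complex.add_im, Complex.sub_re, Complex.sub_im,
              pow_two]
            ring
          linarith
        linarith)
    one_pos (mem_ball_zero_iff.2 hζ1)
  have hds : f ζ = f 0 - conj (f 0) * ζ ^ 2 + ζ * dslope p 0 ζ := by
    have h := sub_smul_dslope p 0 ζ
    rw [hp0, sub_zero, sub_zero, smul_eq_mul] at h
    rw [h]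
    simp only [p]
    ring
  have hsl : ‖dslope p 0 ζ‖ ≤ (4 * C + 2) / (1 - r) := by
    refine hbc.trans ?_
    rw [← add_div]
    have h1 : 0 < 1 - r := by linarith
    refine div_le_div₀ (by positivity) ?_ h1 (by linarith)
    have h2 : 2 * (C + 1) * ‖ζ‖ ≤ 2 * (C + 1) * 1 := by gcongr
    have h3 : ‖dslope p 0 0‖ * (1 + ‖ζ‖) ≤ C * (1 + 1) := by gcongr
    linarith
  have hrest : 0 ≤ (4 * C + 2) / (1 - r) := (norm_nonneg _).trans hsl
  change ‖f ζ‖ ≤ _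
  rw [hds]
  calc ‖f 0 - conj (f 0) * ζ ^ 2 + ζ * dslope p 0 ζ‖
      ≤ ‖f 0‖ + ‖f 0‖ * ‖ζ‖ ^ 2 + ‖ζ‖ * ‖dslope p 0 ζ‖ := by
        refine (norm_add_le _ _).trans (add_le_add ((norm_sub_le _ _).trans_eq ?_)
          (norm_mul _ _).le)
        rw [norm_mul, norm_pow, RCLike.norm_conj]
    _ ≤ C + C * 1 ^ 2 + 1 * ((4 * C + 2) / (1 - r)) := by gcongr
    _ = _ := by ring

/-- Bounds for a generator in the direction of a supporting functional. -/
lemma IsUnitBallGenerator.apply_support_le [FiniteDimensional ℂ F] {G : F → F}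
    (hG : IsUnitBallGenerator G) {C : ℝ} (hC0 : ‖G 0‖ ≤ C) (hC1 : ‖fderiv ℂ G 0‖ ≤ C)
    {l : F →L[ℂ] ℂ} (hl : ‖l‖ ≤ 1) {z : F} (hz : ‖z‖ < 1) (hlz : l z = ‖z‖) :
    (l (G z)).re ≤ 2 * C * (1 - ‖z‖) ∧
      ∀ r < 1, ‖z‖ ≤ r → ‖l (G z)‖ ≤ 2 * C + (4 * C + 2) / (1 - r) := by
  have hl' : ∀ w, ‖l w‖ ≤ ‖w‖ := fun w => (l.le_of_opNorm_le hl w).trans_eq (one_mul _)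
  have hC : 0 ≤ C := (norm_nonneg _).trans hC0
  have hl0 : ‖l (G 0)‖ ≤ C := (hl' _).trans hC0
  rcases eq_or_ne z 0 with rfl | hz0
  · refine ⟨?_, fun r hr _ => ?_⟩
    · rw [norm_zero]
      linarith [Complex.re_le_norm (l (G 0))]
    · have : 0 ≤ (4 * C + 2) / (1 - r) := div_nonneg (by positivity) (by linarith)
      linarith
  · have hzpos : 0 < ‖z‖ := norm_pos_iff.2 hz0
    have hzc : ((‖z‖ : ℝ) : ℂ) ≠ 0 := by exact_mod_cast hzpos.ne'
    set e : F := ((‖z‖ : ℝ) : ℂ)⁻¹ • z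
    have he : ‖e‖ ≤ 1 := by
      simp only [e, norm_smul, norm_inv, Complex.norm_real, norm_norm]
      rw [inv_mul_cancel₀ hzpos.ne']
    have hle : l e = 1 := by simp only [e, map_smul, hlz, smul_eq_mul]; exact inv_mul_cancel₀ hzc
    have hze : ((‖z‖ : ℝ) : ℂ) • e = z := smul_inv_smul₀ hzc z
    have hnz : ‖((‖z‖ : ℝ) : ℂ)‖ = ‖z‖ := by simp
    refine ⟨?_, fun r hr hzr => ?_⟩
    · have h := hG.re_conj_mul_le hl he hle (ζ := (‖z‖ : ℝ)) (mem_ball_zero_iff.2 (by rwa [hnz]))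
      rw [hze, hnz, Complex.conj_ofReal, Complex.re_ofReal_mul, Complex.re_ofReal_mul,
        mul_assoc] at h
      have h1 := le_of_mul_le_mul_left h hzpos
      have h2 : (l (G 0)).re ≤ C := (Complex.re_le_norm _).trans hl0
      have h3 : 0 ≤ 1 - ‖z‖ ^ 2 := by nlinarith
      calc (l (G z)).re ≤ C * (1 - ‖z‖ ^ 2) := h1.trans (by gcongr)
        _ ≤ C * (2 * (1 - ‖z‖)) := by
          gcongr
          nlinarith [sq_nonneg (1 - ‖z‖)]
        _ = _ := by ring
    · have h := hG.norm_apply_smul_le hC0 hC1 hl he hle hr (ζ := (‖z‖ : ℝ)) (by rwa [hnz])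
      rwa [hze] at h

end Generator

section NumericalRange

variable {F : Type*} [NormedAddCommGroup F] [NormedSpace ℂ F]

/-- A vector has a supporting functional, normalised so that the zero vector is allowed. -/
lemma exists_support_functional (z : F) :
    ∃ l : F →L[ℂ] ℂ, ‖l‖ ≤ 1 ∧ l z = ‖z‖ := by
  simpa using exists_dual_vector'' ℂ z

lemma norm_eulerStep_le {G : F → F} {R A M L : ℝ} (hM0 : 0 ≤ M) (hL0 : 0 ≤ L)
    (hA : ∀ z ∈ closedBall (0 : F) R, ∀ l : F →L[ℂ] ℂ, ‖l‖ ≤ 1 → l z = ‖z‖ → ‖l (G z)‖ ≤ A)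
    (hM : ∀ x ∈ closedBall (0 : F) R, ‖G x‖ ≤ M)
    (hL : ∀ x ∈ closedBall (0 : F) R, ∀ y ∈ closedBall (0 : F) R, ‖G x - G y‖ ≤ L * ‖x - y‖)
    {s : ℂ} {z : F} (hz : ‖z‖ + ‖s‖ * M ≤ R) :
    ‖eulerStep G s z‖ ≤ ‖z‖ + ‖s‖ * (A + L * M * ‖s‖) := by
  have hzR : z ∈ closedBall (0 : F) R := by
    rw [mem_closedBall_zero_iff]
    exact (le_add_of_nonneg_right (by positivity)).trans hz
  have hGz := hM z hzR
  set y := eulerStep G s z with hy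
  have hyz : z - y = -(s • G z) := by simp [hy, eulerStep]
  have hyz' : ‖z - y‖ ≤ ‖s‖ * M := by
    rw [hyz, norm_neg, norm_smul]; gcongr
  have hyR : y ∈ closedBall (0 : F) R := by
    rw [mem_closedBall_zero_iff]
    linarith [norm_le_norm_add_norm_sub z y]
  obtain ⟨l, hl, hly⟩ := exists_support_functional y
  have hl' : ∀ w, ‖l w‖ ≤ ‖w‖ := fun w => (l.le_of_opNorm_le hl w).trans_eq (one_mul _)
  have e : y = z + s • G y + s • (G z - G y) := by simp [hy, eulerStep, smul_sub]
  have h1 : ‖l y‖ = ‖y‖ := by rw [hly]; simp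
  calc ‖y‖ = ‖l (z + s • G y + s • (G z - G y))‖ := by rw [← e, h1]
    _ = ‖l z + s * l (G y) + s * l (G z - G y)‖ := by
      simp only [map_add, map_smul, smul_eq_mul]
    _ ≤ ‖l z‖ + ‖s‖ * ‖l (G y)‖ + ‖s‖ * ‖l (G z - G y)‖ := by
      rw [← norm_mul, ← norm_mul]; exact norm_add₃_le
    _ ≤ ‖z‖ + ‖s‖ * A + ‖s‖ * (L * (‖s‖ * M)) := by
      gcongr
      · exact hl' z
      · exact hA y hyR l hl hly
      · exact (hl' _).trans ((hL z hzR y hyR).trans (by gcongr))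
    _ = _ := by ring

/-- A holomorphic map on the unit ball is bounded in terms of its values on supporting
functionals. -/
lemma norm_le_of_norm_support_le [ProperSpace F] {G : F → F}
    (hG : DifferentiableOn ℂ G (ball 0 1)) {ρ R A : ℝ} (hρR : ρ < R) (hR : R < 1) (hA0 : 0 < A)
    (hA : ∀ z ∈ closedBall (0 : F) R, ∀ l : F →L[ℂ] ℂ, ‖l‖ ≤ 1 → l z = ‖z‖ → ‖l (G z)‖ ≤ A)
    {w : F} (hw : w ∈ closedBall (0 : F) ρ) : ‖G w‖ ≤ 8 * A / (R - ρ) := by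
  obtain ⟨M, L, hM0, hL0, hM, hL⟩ := exists_norm_le_and_lipschitz hG hR
  rw [mem_closedBall_zero_iff] at hw
  have hd : 0 < R - ρ := by linarith
  set T : ℝ := (R - ρ) / (4 * A) with hT
  have hT0 : 0 < T := by positivity
  have hTA : T * (2 * A) = (R - ρ) / 2 := by rw [hT]; field_simp; norm_num
  obtain ⟨N, hN0, hN1, hN2⟩ : ∃ N : ℕ, 0 < N ∧ L * M * (T / N) ≤ A ∧ T / N * M ≤ (R - ρ) / 2 := by
    have hlim := tendsto_const_div_atTop_nhds_zero_nat T
    exact ((eventually_gt_atTop 0).and (((hlim.const_mul (L * M)).eventually_le_const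
      (by simpa using hA0)).and ((hlim.mul_const M).eventually_le_const
      (by rw [zero_mul]; positivity)))).exists
  have hN0' : (0 : ℝ) < N := by exact_mod_cast hN0
  set E : ℕ → ℂ → F := fun j c => (eulerStep G (c / N))^[j] w with hE
  have hEsucc : ∀ j c, E (j + 1) c = E j c + (c / N) • G (E j c) := fun j c => by
    simp only [hE, Function.iterate_succ_apply', eulerStep]
  have hE0 : ∀ j, E j 0 = w := fun j => by
    induction j with
    | zero => rfl
    | succ j ih => rw [hEsucc, ih]; simp
  have hjN : ∀ j ≤ N, (j : ℝ) * (T / N * (2 * A)) ≤ (R - ρ) / 2 := fun j hj => by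
    rw [← hTA]
    calc (j : ℝ) * (T / N * (2 * A)) ≤ N * (T / N * (2 * A)) := by gcongr
      _ = T * (2 * A) := by field_simp
  have hEN : ∀ j ≤ N, ∀ c ∈ ball (0 : ℂ) T, ‖E j c‖ ≤ ρ + j * (T / N * (2 * A)) := by
    intro j hj c hc
    induction j with
    | zero => simpa [hE] using hw
    | succ j ih =>
      have ih := ih (Nat.le_of_succ_le hj)
      have hs : ‖c / N‖ ≤ T / N := by
        rw [norm_div, Complex.norm_natCast]
        gcongr
        exact (mem_ball_zero_iff.1 hc).le
      have hjN := hjN j (Nat.le_of_succ_le hj)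
      have hsM : ‖c / N‖ * M ≤ T / N * M := by gcongr
      have h := norm_eulerStep_le hM0 hL0 hA hM hL (s := c / N) (z := E j c) (by linarith)
      have h2 : ‖c / N‖ * (A + L * M * ‖c / N‖) ≤ T / N * (A + L * M * (T / N)) := by gcongr
      have h3 : T / N * (A + L * M * (T / N)) ≤ T / N * (A + A) := by gcongr
      have h4 : E (j + 1) c = eulerStep G (c / N) (E j c) := hEsucc j c
      rw [h4]
      push_cast
      linarith
  have hEmem : ∀ j ≤ N, ∀ c ∈ ball (0 : ℂ) T, ‖E j c‖ < 1 := fun j hj c hc => by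
    have h1 := hEN j hj c hc
    have h2 := hjN j hj
    linarith
  have hEd : ∀ j ≤ N, DifferentiableOn ℂ (E j) (ball 0 T) ∧
      HasDerivAt (E j) (((j : ℂ) / N) • G w) 0 := by
    intro j hj
    induction j with
    | zero => exact ⟨differentiableOn_const w, by simpa using! hasDerivAt_const (0 : ℂ) w⟩
    | succ j ih =>
      have ⟨ih1, ih2⟩ := ih (Nat.le_of_succ_le hj)
      have hGE : DifferentiableOn ℂ (fun c => G (E j c)) (ball 0 T) :=
        hG.comp ih1 fun c hc => mem_ball_zero_iff.2 (hEmem j (Nat.le_of_succ_le hj) c hc)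
      have hfun : E (j + 1) = fun c => E j c + (c / N) • G (E j c) := funext (hEsucc j)
      rw [hfun]
      refine ⟨ih1.add (DifferentiableOn.smul (by fun_prop) hGE), ?_⟩
      have h1 : HasDerivAt (fun c : ℂ => c / N) (1 / N) 0 := (hasDerivAt_id 0).div_const _
      have h2 := (hGE.differentiableAt (ball_mem_nhds 0 hT0)).hasDerivAt
      convert! ih2.add (h1.smul h2) using 1
      rw [hE0, zero_div, zero_smul, zero_add, ← add_smul, Nat.cast_succ, add_div]
  have hbound := norm_deriv_le_div_of_mapsTo_ball (hEd N le_rfl).1 (R₂ := 2) (fun c hc => by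
    rw [mem_closedBall, dist_eq_norm, hE0]
    linarith [norm_sub_le (E N c) w, hEmem N le_rfl c hc]) hT0
  rw [(hEd N le_rfl).2.deriv, div_self (by exact_mod_cast hN0.ne'), one_smul] at hbound
  refine hbound.trans_eq ?_
  rw [hT]
  field_simp
  norm_num

end NumericalRange

section Trajectories

variable {F : Type*} [NormedAddCommGroup F] [NormedSpace ℂ F]

/-- Trajectories of a generator approach the boundary at a rate controlled by its first jet at the
origin. -/
lemma IsUnitBallGenerator.norm_trajectory_le [FiniteDimensional ℂ F] {G : F → F}
    (hG : IsUnitBallGenerator G) {C : ℝ} (hC0 : ‖G 0‖ ≤ C) (hC1 : ‖fderiv ℂ G 0‖ ≤ C)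
    {u : ℝ → F} (hu : ∀ t : ℝ, 0 ≤ t → u t ∈ ball (0 : F) 1 ∧ HasDerivAt u (G (u t)) t)
    {t : ℝ} (ht : 0 ≤ t) : ‖u t‖ ≤ 1 - (1 - ‖u 0‖) * Real.exp (-(2 * C * t)) := by
  have hcont : ∀ x, 0 ≤ x → ContinuousAt u x := fun x hx => (hu x hx).2.continuousAt
  have h := le_gronwallBound_of_liminf_deriv_right_le (f := fun x => ‖u x‖ - 1)
    (f' := fun x => 2 * C * (1 - ‖u x‖)) (δ := ‖u 0‖ - 1) (K := -(2 * C)) (ε := 0) (a := 0)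
    (b := t) (fun x hx => ((hcont x hx.1).norm.sub continuousAt_const).continuousWithinAt)
    (fun x hx r hr => by
      have hGu : ContinuousAt (fun z => G (u z)) x :=
        ((hG.differentiableOn.differentiableAt (isOpen_ball.mem_nhds (hu x hx.1).1)).continuousAt
          ).comp_of_eq (hcont x hx.1) rfl
      have hslope : Tendsto (fun z => (z - x)⁻¹ • (u z - u x)) (𝓝[>] x) (𝓝 (G (u x))) :=
        (hasDerivAt_iff_tendsto_slope.1 (hu x hx.1).2).mono_left
          (nhdsWithin_mono x fun z hz => ne_of_gt hz)
      have hlim : Tendsto (fun z => ‖(z - x)⁻¹ • (u z - u x) - G (u z)‖ + 2 * C * (1 - ‖u z‖))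
          (𝓝[>] x) (𝓝 (‖G (u x) - G (u x)‖ + 2 * C * (1 - ‖u x‖))) :=
        (hslope.sub (hGu.tendsto.mono_left nhdsWithin_le_nhds)).norm.add
          ((((hcont x hx.1).tendsto.mono_left nhdsWithin_le_nhds).norm.const_sub 1).const_mul _)
      rw [sub_self, norm_zero, zero_add] at hlim
      refine Eventually.frequently ?_
      filter_upwards [hlim.eventually_lt_const hr, self_mem_nhdsWithin] with z hz hxz
      refine lt_of_le_of_lt ?_ hz
      have hxz' : 0 < z - x := sub_pos.2 hxz
      obtain ⟨l, hl, hlz⟩ := exists_support_functional (u z)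
      have hl' : ∀ w, ‖l w‖ ≤ ‖w‖ := fun w => (l.le_of_opNorm_le hl w).trans_eq (one_mul _)
      have hz1 := (hu z (hx.1.trans (le_of_lt hxz))).1
      have h1 := (hG.apply_support_le hC0 hC1 hl (mem_ball_zero_iff.1 hz1) hlz).1
      have h2 : (l (u x)).re ≤ ‖u x‖ := (Complex.re_le_norm _).trans (hl' _)
      have h3 : (l ((z - x)⁻¹ • (u z - u x) - G (u z))).re ≤
          ‖(z - x)⁻¹ • (u z - u x) - G (u z)‖ := (Complex.re_le_norm _).trans (hl' _)
      have h4 : (l ((z - x)⁻¹ • (u z - u x) - G (u z))).re =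
          (z - x)⁻¹ * (‖u z‖ - (l (u x)).re) - (l (G (u z))).re := by
        rw [map_sub, ← Complex.coe_smul, map_smul, map_sub, hlz, smul_eq_mul, Complex.sub_re,
          Complex.re_ofReal_mul, Complex.sub_re, Complex.ofReal_re]
      have h5 : (z - x)⁻¹ * (‖u z‖ - 1 - (‖u x‖ - 1)) ≤ (z - x)⁻¹ * (‖u z‖ - (l (u x)).re) :=
        mul_le_mul_of_nonneg_left (by linarith) (by positivity)
      linarith)
    le_rfl (fun x _ => by linarith) t ⟨ht, le_rfl⟩
  rw [gronwallBound_ε0, sub_zero, neg_mul] at h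
  linarith

/-- A locally uniform limit of generators with bounded first jets at the origin is a generator. -/
lemma IsUnitBallGenerator.of_tendstoLocallyUniformlyOn [FiniteDimensional ℂ F] {G : ℕ → F → F}
    {g : F → F} (hG : ∀ k, IsUnitBallGenerator (G k)) {C : ℝ} (hC0 : ∀ k, ‖G k 0‖ ≤ C)
    (hC1 : ∀ k, ‖fderiv ℂ (G k) 0‖ ≤ C) (hg : DifferentiableOn ℂ g (ball 0 1))
    (hlim : TendstoLocallyUniformlyOn G g atTop (ball 0 1)) : IsUnitBallGenerator g := by
  have : ProperSpace F := FiniteDimensional.proper ℂ F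
  have : CompleteSpace F := FiniteDimensional.complete ℂ F
  have hC : 0 ≤ C := (norm_nonneg _).trans (hC0 0)
  refine ⟨hg, fun z₀ hz₀ => ?_⟩
  have hz₀' : ‖z₀‖ < 1 := mem_ball_zero_iff.1 hz₀
  choose u hu0 hu using fun k => (hG k).exists_trajectory z₀ hz₀
  have hucont : ∀ k t, 0 ≤ t → ContinuousAt (u k) t := fun k t ht => (hu k t ht).2.continuousAt
  have hR : ∀ T, ∃ R < 1, ∀ k, ∀ t ∈ Icc 0 T, u k t ∈ closedBall (0 : F) R := fun T => by
    refine ⟨1 - (1 - ‖z₀‖) * Real.exp (-(2 * C * T)), ?_, fun k t ht => ?_⟩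
    · have : 0 < (1 - ‖z₀‖) * Real.exp (-(2 * C * T)) :=
        mul_pos (by linarith) (Real.exp_pos _)
      linarith
    · rw [mem_closedBall_zero_iff]
      refine ((hG k).norm_trajectory_le (hC0 k) (hC1 k) (hu k) ht.1).trans ?_
      rw [hu0 k]
      have h1 : 0 ≤ 1 - ‖z₀‖ := by linarith
      have h2 := ht.2
      gcongr
  have hunif : ∀ R < 1, ∀ ε > 0, ∀ᶠ k in atTop, ∀ x ∈ closedBall (0 : F) R,
      dist (g x) (G k x) < ε := fun R hR1 =>
    Metric.tendstoUniformlyOn_iff.1 ((tendstoLocallyUniformlyOn_iff_forall_isCompact isOpen_ball).1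
      hlim _ (closedBall_subset_ball hR1) (isCompact_closedBall 0 R))
  have hcauchy : ∀ t, 0 ≤ t → CauchySeq fun k => u k t := by
    intro t ht
    obtain ⟨R, hR1, hRu⟩ := hR t
    obtain ⟨M, L, -, hL0, -, hL⟩ := exists_norm_le_and_lipschitz hg hR1
    lift L to NNReal using hL0
    have hLip : LipschitzOnWith L g (closedBall 0 R) :=
      LipschitzOnWith.of_dist_le_mul fun x hx y hy => by
        simpa only [dist_eq_norm] using hL x hx y hy
    rw [Metric.cauchySeq_iff]
    intro η hη
    have hgr : Tendsto (fun ε : ℝ => gronwallBound 0 L (ε + ε) (t - 0)) (𝓝[>] 0) (𝓝 0) := by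
      have h : Continuous fun ε : ℝ => gronwallBound 0 L (ε + ε) (t - 0) :=
        (gronwallBound_continuous_ε 0 L (t - 0)).comp (continuous_id.add continuous_id)
      exact (h.tendsto' 0 0 (by rw [add_zero, gronwallBound_ε0_δ0])).mono_left nhdsWithin_le_nhds
    obtain ⟨ε, hε1, hε⟩ := ((hgr.eventually_lt_const hη).and self_mem_nhdsWithin).exists
    obtain ⟨N, hN⟩ := eventually_atTop.1 (hunif R hR1 ε hε)
    refine ⟨N, fun m hm n hn => lt_of_le_of_lt ?_ hε1⟩
    exact dist_le_of_approx_trajectories_ODE_of_mem (v := fun _ => g)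
      (s := fun _ => closedBall 0 R) (fun _ _ => hLip)
      (fun τ hτ => (hucont m τ hτ.1).continuousWithinAt)
      (fun τ hτ => (hu m τ hτ.1).2.hasDerivWithinAt)
      (fun τ hτ => by
        rw [dist_comm]
        exact (hN m hm _ (hRu m τ (Ico_subset_Icc_self hτ))).le)
      (fun τ hτ => hRu m τ (Ico_subset_Icc_self hτ))
      (fun τ hτ => (hucont n τ hτ.1).continuousWithinAt)
      (fun τ hτ => (hu n τ hτ.1).2.hasDerivWithinAt)
      (fun τ hτ => by
        rw [dist_comm]
        exact (hN n hn _ (hRu n τ (Ico_subset_Icc_self hτ))).le)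
      (fun τ hτ => hRu n τ (Ico_subset_Icc_self hτ))
      (by rw [hu0, hu0, dist_self]) t ⟨ht, le_rfl⟩
  choose! U hU using fun t ht => cauchySeq_tendsto_of_complete (hcauchy t ht)
  have hUmem : ∀ t, 0 ≤ t → U t ∈ ball (0 : F) 1 := fun t ht => by
    obtain ⟨R, hR1, hRu⟩ := hR t
    exact closedBall_subset_ball hR1 (isClosed_closedBall.mem_of_tendsto (hU t ht)
      (Eventually.of_forall fun k => hRu k t ⟨ht, le_rfl⟩))
  have hB : ∀ T, ∃ B, 0 ≤ B ∧ ∀ᶠ k in atTop, ∀ t ∈ Icc 0 T, ‖G k (u k t)‖ ≤ B := fun T => by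
    obtain ⟨R, hR1, hRu⟩ := hR T
    obtain ⟨M, L, hM0, -, hM, -⟩ := exists_norm_le_and_lipschitz hg hR1
    refine ⟨M + 1, by positivity, ?_⟩
    filter_upwards [hunif R hR1 1 one_pos] with k hk t ht
    have h1 := hk _ (hRu k t ht)
    rw [dist_comm, dist_eq_norm] at h1
    linarith [hM _ (hRu k t ht), norm_le_norm_sub_add (G k (u k t)) (g (u k t))]
  have hUcont : ContinuousOn U (Ici 0) := by
    intro t ht
    have ht0 : (0 : ℝ) ≤ t := ht
    obtain ⟨B, hB0, hB⟩ := hB (t + 1)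
    lift B to NNReal using hB0
    have hLip : LipschitzOnWith B U (Icc 0 (t + 1)) :=
      LipschitzOnWith.of_dist_le_mul fun x hx y hy => by
        refine le_of_tendsto ((hU x hx.1).dist (hU y hy.1)) ?_
        filter_upwards [hB] with k hk
        rw [dist_eq_norm, dist_eq_norm]
        exact (convex_Icc 0 (t + 1)).norm_image_sub_le_of_norm_hasDerivWithin_le
          (fun τ hτ => (hu k τ hτ.1).2.hasDerivWithinAt) hk hy hx
    refine (hLip.continuousOn t ⟨ht0, by linarith⟩).mono_of_mem_nhdsWithin ?_
    filter_upwards [self_mem_nhdsWithin, nhdsWithin_le_nhds (Iio_mem_nhds (lt_add_one t))]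
      with τ h1 h2 using ⟨h1, le_of_lt h2⟩
  have hV : Continuous fun τ => g (U (max τ 0)) :=
    hg.continuousOn.comp_continuous
      (hUcont.comp_continuous (by fun_prop) fun τ => le_max_right τ 0)
      fun τ => hUmem _ (le_max_right τ 0)
  have heq : ∀ t, 0 ≤ t → z₀ + ∫ τ in (0 : ℝ)..t, g (U (max τ 0)) = U t := by
    intro t ht
    obtain ⟨B, hB0, hB⟩ := hB t
    have hsub : uIoc 0 t ⊆ Icc 0 t := by rw [uIoc_of_le ht]; exact Ioc_subset_Icc_self
    have hGu : ∀ k, ContinuousOn (fun τ => G k (u k τ)) (Icc 0 t) := fun k =>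
      (hG k).differentiableOn.continuousOn.comp
        (fun τ hτ => (hucont k τ hτ.1).continuousWithinAt) fun τ hτ => (hu k τ hτ.1).1
    have hint : ∀ k, ∫ τ in (0 : ℝ)..t, G k (u k τ) = u k t - z₀ := fun k => by
      rw [← hu0 k]
      refine intervalIntegral.integral_eq_sub_of_hasDerivAt (fun τ hτ => ?_) ?_
      · rw [uIcc_of_le ht] at hτ
        exact (hu k τ hτ.1).2
      · exact ContinuousOn.intervalIntegrable (by rw [uIcc_of_le ht]; exact hGu k)
    have hconv := intervalIntegral.tendsto_integral_filter_of_dominated_convergence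
      (μ := MeasureTheory.volume) (a := 0) (b := t) (l := atTop)
      (F := fun k τ => G k (u k τ)) (f := fun τ => g (U (max τ 0))) (fun _ => B)
      (Eventually.of_forall fun k => ((hGu k).mono hsub).aestronglyMeasurable measurableSet_uIoc)
      (by filter_upwards [hB] with k hk using Eventually.of_forall fun τ hτ => hk τ (hsub hτ))
      (by simp)
      (Eventually.of_forall fun τ hτ => by
        have hτ0 : 0 ≤ τ := (hsub hτ).1
        rw [max_eq_left hτ0]
        exact hlim.tendsto_comp (hg.continuousOn _ (hUmem τ hτ0)) (hUmem τ hτ0)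
          (tendsto_nhdsWithin_iff.2 ⟨hU τ hτ0, Eventually.of_forall fun k => (hu k τ hτ0).1⟩))
    simp only [hint] at hconv
    rw [tendsto_nhds_unique hconv ((hU t ht).sub_const z₀), add_sub_cancel]
  refine ⟨fun t => z₀ + ∫ τ in (0 : ℝ)..t, g (U (max τ 0)), by simp, fun t ht => ?_⟩
  simp only [heq t ht]
  refine ⟨hUmem t ht, ?_⟩
  have h := ((hV.integral_hasStrictDerivAt 0 t).hasDerivAt).const_add z₀
  simpa only [max_eq_left ht] using h

end Trajectories

section Main

/-- Normality of the family of generators of the unit ball with bounded first jets at the origin. -/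
lemma exists_subseq_tendsto_isUnitBallGenerator {F : Type*} [NormedAddCommGroup F]
    [NormedSpace ℂ F] [FiniteDimensional ℂ F] {G : ℕ → F → F}
    (hG : ∀ k, IsUnitBallGenerator (G k)) {C : ℝ} (hC0 : ∀ k, ‖G k 0‖ ≤ C)
    (hC1 : ∀ k, ‖fderiv ℂ (G k) 0‖ ≤ C) :
    ∃ φ : ℕ → ℕ, StrictMono φ ∧ ∃ g : F → F, IsUnitBallGenerator g ∧
      TendstoLocallyUniformlyOn (fun k => G (φ k)) g atTop (ball 0 1) := by
  have : ProperSpace F := FiniteDimensional.proper ℂ F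
  have hC : 0 ≤ C := (norm_nonneg _).trans (hC0 0)
  obtain ⟨φ, hφ, g, hg, hlim⟩ := exists_subseq_tendstoLocallyUniformlyOn_ball
    (fun k => (hG k).differentiableOn) fun ρ hρ => by
      obtain ⟨R, hρR, hR⟩ := exists_between hρ
      refine ⟨8 * (2 * C + (4 * C + 2) / (1 - R)) / (R - ρ), fun k w hw => ?_⟩
      have hR0 : 0 < 1 - R := by linarith
      refine norm_le_of_norm_support_le (hG k).differentiableOn hρR hR (by positivity)
        (fun z hz l hl hlz => ?_) hw
      rw [mem_closedBall_zero_iff] at hz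
      exact ((hG k).apply_support_le (hC0 k) (hC1 k) hl (hz.trans_lt hR) hlz).2 R hR hz
  exact ⟨φ, hφ, g, .of_tendstoLocallyUniformlyOn (fun k => hG (φ k)) (fun k => hC0 (φ k))
    (fun k => hC1 (φ k)) hg hlim, hlim⟩

universe u

lemma exists_linearEquiv_norm_eq_seminorm {V : Type u} [AddCommGroup V] [Module ℂ V]
    (p : Seminorm ℂ V) (hp : ∀ x, p x = 0 → x = 0) :
    ∃ (F : Type u) (_ : NormedAddCommGroup F) (_ : NormedSpace ℂ F) (e : V ≃ₗ[ℂ] F),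
      ∀ x, ‖e x‖ = p x := by
  let q : AddGroupNorm V := { p.toAddGroupSeminorm with eq_zero_of_map_eq_zero' := hp }
  let _ : NormedAddCommGroup V := q.toNormedAddCommGroup
  exact ⟨V, inferInstance, ⟨fun a x => (map_smul_eq_mul p a x).le⟩, LinearEquiv.refl ℂ V,
    fun _ => rfl⟩

/-- A bounded balanced convex domain is the unit ball of an equivalent norm. -/
lemma exists_continuousLinearEquiv_mem_iff {E : Type u} [NormedAddCommGroup E] [NormedSpace ℂ E]
    [FiniteDimensional ℂ E] {D : Set E} (hDo : IsOpen D) (hDb : Bornology.IsBounded D)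
    (hDc : Convex ℝ D) (hDbal : Balanced ℂ D) (h0 : (0 : E) ∈ D) :
    ∃ (F : Type u) (_ : NormedAddCommGroup F) (_ : NormedSpace ℂ F) (e : E ≃L[ℂ] F),
      ∀ x, x ∈ D ↔ e x ∈ ball (0 : F) 1 := by
  have habs : Absorbent ℝ D := absorbent_nhds_zero (hDo.mem_nhds h0)
  obtain ⟨F, iF, iF', e, he⟩ := exists_linearEquiv_norm_eq_seminorm
    (gaugeSeminorm hDbal hDc habs) fun x hx => by
      by_contra h
      have := (gauge_pos habs (NormedSpace.isVonNBounded_iff ℝ |>.2 hDb)).2 h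
      exact this.ne' hx
  refine ⟨F, iF, iF', e.toContinuousLinearEquiv, fun x => ?_⟩
  have h : gauge D x < 1 ↔ x ∈ D :=
    Set.ext_iff.1 (setOfPred_gauge_lt_one_eq_self_of_isOpen hDc h0 hDo) x
  rw [mem_ball_zero_iff, ← h]
  change _ ↔ ‖e x‖ < 1
  rw [he]
  rfl

end Main

end NormalFamilies

theorem stmt12 {n : ℕ} (D : Set (EuclideanSpace ℂ (Fin n)))
    (hDo : IsOpen D) (hDb : Bornology.IsBounded D) (hDc : Convex ℝ D)
    (hDbal : ∀ c : ℂ, ‖c‖ ≤ 1 → ∀ z ∈ D, c • z ∈ D)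
    (h0 : (0 : EuclideanSpace ℂ (Fin n)) ∈ D)
    (G : ℕ → EuclideanSpace ℂ (Fin n) → EuclideanSpace ℂ (Fin n))
    (hGd : ∀ k, DifferentiableOn ℂ (G k) D)
    (hGgen : ∀ k, ∀ z0 ∈ D, ∃ u : ℝ → EuclideanSpace ℂ (Fin n), u 0 = z0 ∧
      ∀ t : ℝ, 0 ≤ t → u t ∈ D ∧ HasDerivAt u (G k (u t)) t)
    (C : ℝ) (hC : 0 < C)
    (hbound : ∀ k, ‖G k 0‖ + ‖fderiv ℂ (G k) 0‖ ≤ C) :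
    ∃ φ : ℕ → ℕ, StrictMono φ ∧
      ∃ g : EuclideanSpace ℂ (Fin n) → EuclideanSpace ℂ (Fin n),
        DifferentiableOn ℂ g D ∧
        TendstoLocallyUniformlyOn (fun k => G (φ k)) g Filter.atTop D ∧
        ∀ z0 ∈ D, ∃ u : ℝ → EuclideanSpace ℂ (Fin n), u 0 = z0 ∧
          ∀ t : ℝ, 0 ≤ t → u t ∈ D ∧ HasDerivAt u (g (u t)) t := by
  have hbal : Balanced ℂ D := fun c hc => by
    rintro _ ⟨z, hz, rfl⟩
    exact hDbal c hc z hz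
  obtain ⟨F, _, _, e, he⟩ := exists_continuousLinearEquiv_mem_iff hDo hDb hDc hbal h0
  have hfin : FiniteDimensional ℂ F := e.toLinearEquiv.finiteDimensional
  have hsymm : ∀ y ∈ ball (0 : F) 1, e.symm y ∈ D := fun y hy => by
    rw [he, e.apply_symm_apply]; exact hy
  have hC0 : ∀ k, ‖G k 0‖ ≤ C := fun k => by linarith [hbound k, norm_nonneg (fderiv ℂ (G k) 0)]
  have hC1 : ∀ k, ‖fderiv ℂ (G k) 0‖ ≤ C := fun k => by linarith [hbound k, norm_nonneg (G k 0)]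
  set H : ℕ → F → F := fun k y => e (G k (e.symm y)) with hH
  set a := ‖(e : EuclideanSpace ℂ (Fin n) →L[ℂ] F)‖
  set b := ‖(e.symm : F →L[ℂ] EuclideanSpace ℂ (Fin n))‖
  have hHgen : ∀ k, IsUnitBallGenerator (H k) := fun k => by
    refine ⟨e.differentiable.comp_differentiableOn
      ((hGd k).comp e.symm.differentiable.differentiableOn hsymm), fun y hy => ?_⟩
    obtain ⟨u, hu0, hu⟩ := hGgen k _ (hsymm y hy)
    refine ⟨fun t => e (u t), by simp [hu0], fun t ht => ⟨(he _).1 (hu t ht).1, ?_⟩⟩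
    simp only [hH, e.symm_apply_apply]
    exact ((e : EuclideanSpace ℂ (Fin n) →L[ℂ] F).restrictScalars ℝ).hasFDerivAt.comp_hasDerivAt t
      (hu t ht).2
  obtain ⟨φ, hφ, g, hg, hlim⟩ := exists_subseq_tendsto_isUnitBallGenerator hHgen
    (C := a * C + a * C * b) (fun k => by
      have h1 : ‖H k 0‖ ≤ a * ‖G k 0‖ := by
        simpa [hH] using (e : EuclideanSpace ℂ (Fin n) →L[ℂ] F).le_opNorm (G k 0)
      calc ‖H k 0‖ ≤ a * C := h1.trans (by gcongr; exact hC0 k)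
        _ ≤ _ := le_add_of_nonneg_right (by positivity))
    (fun k => by
      have h1 : HasFDerivAt (G k) (fderiv ℂ (G k) 0) (e.symm 0) := by
        rw [map_zero]
        exact ((hGd k).differentiableAt (hDo.mem_nhds h0)).hasFDerivAt
      have h2 : fderiv ℂ (H k) 0 = (e : EuclideanSpace ℂ (Fin n) →L[ℂ] F) ∘L
          (fderiv ℂ (G k) 0) ∘L (e.symm : F →L[ℂ] EuclideanSpace ℂ (Fin n)) :=
        (e.hasFDerivAt.comp 0 (h1.comp 0 e.symm.hasFDerivAt)).fderiv
      rw [h2]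
      calc _ ≤ a * (‖fderiv ℂ (G k) 0‖ * b) :=
            (ContinuousLinearMap.opNorm_comp_le _ _).trans
              (by gcongr; exact ContinuousLinearMap.opNorm_comp_le _ _)
        _ ≤ a * (C * b) := by gcongr; exact hC1 k
        _ = a * C * b := by ring
        _ ≤ _ := le_add_of_nonneg_left (by positivity))
  refine ⟨φ, hφ, fun x => e.symm (g (e x)), ?_, ?_, fun z hz => ?_⟩
  · exact e.symm.differentiable.comp_differentiableOn
      (hg.differentiableOn.comp e.differentiable.differentiableOn fun x hx => (he x).1 hx)
  · have h1 := hlim.comp e (t := D) (fun x hx => (he x).1 hx) e.continuous.continuousOn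
    have h2 := UniformContinuous.comp_tendstoLocallyUniformlyOn
      (e.symm : F →L[ℂ] EuclideanSpace ℂ (Fin n)).uniformContinuous h1
    refine h2.congr fun k x _ => ?_
    simp [hH]
  · obtain ⟨u, hu0, hu⟩ := hg.exists_trajectory (e z) ((he z).1 hz)
    refine ⟨fun t => e.symm (u t), by simp [hu0], fun t ht => ⟨hsymm _ (hu t ht).1, ?_⟩⟩
    simp only [e.apply_symm_apply]
    exact ((e.symm : F →L[ℂ] EuclideanSpace ℂ (Fin n)).restrictScalars
      ℝ).hasFDerivAt.comp_hasDerivAt t (hu t ht).2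
end
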